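/- arXiv:2006.13102 — 3 statements merged into one kernel-verified Lean document; each statement's English description precedes it below -/
import Mathlib

section
/- Let f ∈ 𝒮(S^m) be a symmetric m-tensor field on ℝⁿ with Schwartz components and let 0 ≤ r ≤ m. Then for every choice of fixed indices 1 ≤ i₁,…,i_r ≤ n the following identity holds on ℝⁿ×(ℝⁿ∖{0}): (J^0 f_{m−r})_{i₁…i_r} = ((m−r)!/m!) σ(i₁,…,i_r) Σ_{p=0}^r (−1)^p C(r,p) ∂^r(J^p f) / (∂x^{i₁}⋯∂x^{i_p} ∂ξ^{i_{p+1}}⋯∂ξ^{i_r}). -/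
noncomputable section

open MeasureTheory Filter
open scoped RealInnerProductSpace BigOperators

/-- `ℝⁿ` with the Euclidean structure. -/
abbrev En (n : ℕ) := EuclideanSpace ℝ (Fin n)

/-- A symmetric `m`-tensor on `ℝⁿ` (pointwise): a family of reals indexed by
`(i₁,…,i_m)`, invariant under permutations of the indices. -/
def IsSymTensor {n m : ℕ} (F : (Fin m → Fin n) → ℝ) : Prop :=
  ∀ (π : Equiv.Perm (Fin m)) (i : Fin m → Fin n), F (i ∘ π) = F i

/-- A symmetric `m`-tensor field on `ℝⁿ`. -/
def IsSymField {n m : ℕ} (f : (Fin m → Fin n) → En n → ℝ) : Prop :=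
  ∀ (π : Equiv.Perm (Fin m)) (i : Fin m → Fin n), f (i ∘ π) = f i

/-- All components of the field are Schwartz functions. -/
def IsSchwartzField {n m : ℕ} (f : (Fin m → Fin n) → En n → ℝ) : Prop :=
  ∀ i, ∃ φ : SchwartzMap (En n) ℝ, ⇑φ = f i

/-- Symmetrization `σ` of a tensor: average over all permutations of the indices. -/
def symz {n m : ℕ} {α : Type*} [AddCommMonoid α] [Module ℝ α]
    (F : (Fin m → Fin n) → α) : (Fin m → Fin n) → α :=
  fun i => ((m.factorial : ℝ))⁻¹ • ∑ π : Equiv.Perm (Fin m), F (i ∘ π)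

/-- The `q`-th momentum ray transform
`(J^q f)(x,ξ) = ∫ t^q f_{i₁…i_m}(x+tξ) ξ^{i₁}⋯ξ^{i_m} dt`, as a function on all of
`ℝⁿ × ℝⁿ`; its restriction to `TSⁿ⁻¹ = {|ξ|=1, ⟨x,ξ⟩=0}` is `I^q f`. -/
def momRT {n m : ℕ} (q : ℕ) (f : (Fin m → Fin n) → En n → ℝ) (x ξ : En n) : ℝ :=
  ∫ t : ℝ, t ^ q * ∑ i : Fin m → Fin n, f i (x + t • ξ) * ∏ r, ξ (i r)

/-- Coordinate partial derivative `∂/∂x^j`. -/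
def pd {n : ℕ} (j : Fin n) (u : En n → ℝ) : En n → ℝ :=
  fun x => fderiv ℝ u x (EuclideanSpace.single j 1)

/-- Inner differentiation (symmetrized derivative) `d`. -/
def dsym {n m : ℕ} (u : (Fin m → Fin n) → En n → ℝ) :
    (Fin (m + 1) → Fin n) → En n → ℝ :=
  symz (fun i => pd (i (Fin.last m)) (u (fun s => i s.castSucc)))

/-- Iterated inner differentiation `d^k`. -/
def dpow {n m : ℕ} : (k : ℕ) → ((Fin m → Fin n) → En n → ℝ) →
    (Fin (m + k) → Fin n) → En n → ℝ
  | 0, u => u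
  | k + 1, u => dsym (dpow k u)

/-- Divergence `δ`. -/
def divg {n m : ℕ} (u : (Fin (m + 1) → Fin n) → En n → ℝ) :
    (Fin m → Fin n) → En n → ℝ :=
  fun i x => ∑ j : Fin n, pd j (u (Fin.snoc i j)) x

/-- Iterated divergence `δ^k`. -/
def divpow {n : ℕ} : (k : ℕ) → {p : ℕ} → ((Fin (p + k) → Fin n) → En n → ℝ) →
    (Fin p → Fin n) → En n → ℝ
  | 0, _, u => u
  | k + 1, _, u => divpow k (divg u)

/-- Partial derivative `∂/∂x^j` in the first slot of a function of `(x, ξ)`. -/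
def pdx {n : ℕ} (j : Fin n) (F : En n → En n → ℝ) : En n → En n → ℝ :=
  fun x ξ => fderiv ℝ (fun x' => F x' ξ) x (EuclideanSpace.single j 1)

/-- Partial derivative `∂/∂ξ^j` in the second slot of a function of `(x, ξ)`. -/
def pdxi {n : ℕ} (j : Fin n) (F : En n → En n → ℝ) : En n → En n → ℝ :=
  fun x ξ => fderiv ℝ (fun ξ' => F x ξ') ξ (EuclideanSpace.single j 1)

/-- Iterated `∂x` derivatives along a list of indices. -/
def pdxList {n : ℕ} (l : List (Fin n)) (F : En n → En n → ℝ) : En n → En n → ℝ :=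
  l.foldr pdx F

/-- Iterated `∂ξ` derivatives along a list of indices. -/
def pdxiList {n : ℕ} (l : List (Fin n)) (F : En n → En n → ℝ) : En n → En n → ℝ :=
  l.foldr pdxi F

/-- The John operator `J_{ij} = ∂²/∂x^i∂ξ^j − ∂²/∂x^j∂ξ^i`. -/
def johnOp {n : ℕ} (i j : Fin n) (F : En n → En n → ℝ) : En n → En n → ℝ :=
  fun x ξ => pdx i (pdxi j F) x ξ - pdx j (pdxi i F) x ξ

/-- Iterated John operators `J_{i₁j₁} ⋯ J_{i_r j_r}`. -/
def johnIter {n : ℕ} (l : List (Fin n × Fin n)) (F : En n → En n → ℝ) : En n → En n → ℝ :=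
  l.foldr (fun ij G => johnOp ij.1 ij.2 G) F

/-- Sharafutdinov's Schwartz space `𝒮(TSⁿ⁻¹)`: a function on
`TSⁿ⁻¹ = {(x,ξ) : |ξ|=1, ⟨x,ξ⟩=0}` is Schwartz iff it is the restriction of a
Schwartz function on `ℝⁿ × ℝⁿ`. -/
def IsSchwartzOnTS {n : ℕ} (φ : En n → En n → ℝ) : Prop :=
  ∃ Φ : SchwartzMap (En n × En n) ℝ, ∀ x ξ : En n, ‖ξ‖ = 1 → ⟪x, ξ⟫ = 0 → φ x ξ = Φ (x, ξ)

/-- Symmetric multiplication `i_{x^{⊗k}} : S^m → S^{m+k}`. -/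
def iPowTens {n m k : ℕ} (x : En n) (V : (Fin m → Fin n) → ℝ) :
    (Fin (m + k) → Fin n) → ℝ :=
  symz (fun i => (∏ r : Fin k, x (i (Fin.natAdd m r))) * V (fun s => i (Fin.castAdd k s)))

/-- Convolution (contraction) `j_{x^{⊗k}} : S^{m+k} → S^m`. -/
def jPowTens {n m k : ℕ} (x : En n) (F : (Fin (m + k) → Fin n) → ℝ) :
    (Fin m → Fin n) → ℝ :=
  fun i => ∑ j : Fin k → Fin n, (∏ r, x (j r)) * F (Fin.append i j)

namespace MRT

open SchwartzMap

/-- The integral `∫ t^q g(x+tξ) dt`. -/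
def rayInt {n : ℕ} (q : ℕ) (g : SchwartzMap (En n) ℝ) (z : En n × En n) : ℝ :=
  ∫ t : ℝ, t ^ q * g (z.1 + t • z.2)

lemma geom_bound {n : ℕ} (z₀ : En n × En n) (h : z₀.2 ≠ 0) :
    ∃ ε > 0, ∃ K : ℝ, 0 ≤ K ∧ ∀ z ∈ Metric.ball z₀ ε, ∀ t : ℝ,
      1 + |t| ≤ K * (1 + ‖z.1 + t • z.2‖) := by
  have hp : 0 < ‖z₀.2‖ := norm_pos_iff.mpr h
  set c := ‖z₀.2‖ / 2 with hc
  have hcp : 0 < c := by positivity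
  refine ⟨c, hcp, 1 + (1 + (‖z₀.1‖ + c)) / c, by positivity, ?_⟩
  intro z hz t
  have hz' : ‖z - z₀‖ < c := by simpa [dist_eq_norm] using hz
  have h1 : ‖z.1 - z₀.1‖ < c := lt_of_le_of_lt (norm_fst_le (z - z₀)) hz'
  have h2 : ‖z.2 - z₀.2‖ < c := lt_of_le_of_lt (norm_snd_le (z - z₀)) hz'
  have h3 : ‖z.1‖ ≤ ‖z₀.1‖ + c := by
    have := norm_sub_norm_le z.1 z₀.1
    linarith
  have h4 : c ≤ ‖z.2‖ := by
    have := norm_sub_norm_le z₀.2 z.2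
    rw [norm_sub_rev] at this
    linarith
  have h5 : |t| * ‖z.2‖ ≤ ‖z.1 + t • z.2‖ + ‖z.1‖ := by
    have : ‖t • z.2‖ ≤ ‖z.1 + t • z.2‖ + ‖z.1‖ := by
      calc ‖t • z.2‖ = ‖(z.1 + t • z.2) - z.1‖ := by simp
        _ ≤ _ := norm_sub_le _ _
    rwa [norm_smul, Real.norm_eq_abs] at this
  set y := ‖z.1 + t • z.2‖ with hy
  have hy0 : 0 ≤ y := norm_nonneg _
  have h6 : |t| * c ≤ y + (‖z₀.1‖ + c) := by
    have := mul_le_mul_of_nonneg_left h4 (abs_nonneg t)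
    linarith
  have h7 : |t| ≤ (y + (‖z₀.1‖ + c)) / c := by rwa [le_div_iff₀ hcp]
  have h8 : (y + (‖z₀.1‖ + c)) / c ≤ (1 + (‖z₀.1‖ + c)) / c * (1 + y) := by
    rw [div_mul_eq_mul_div]
    gcongr
    nlinarith [norm_nonneg z₀.1, mul_nonneg (add_nonneg (norm_nonneg z₀.1) hcp.le) hy0]
  nlinarith

lemma schwartz_bound {n : ℕ} {F : Type*} [NormedAddCommGroup F] [NormedSpace ℝ F]
    (g : SchwartzMap (En n) F) (z₀ : En n × En n) (h : z₀.2 ≠ 0) (k : ℕ) :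
    ∃ ε > 0, ∃ C : ℝ, ∀ z ∈ Metric.ball z₀ ε, ∀ t : ℝ,
      (1 + |t|) ^ k * ‖g (z.1 + t • z.2)‖ ≤ C * (1 + t ^ 2)⁻¹ := by
  obtain ⟨ε, hε, K, hK, hb⟩ := geom_bound z₀ h
  set C := 2 ^ (k + 2) * (Finset.Iic ((k + 2, 0) : ℕ × ℕ)).sup
    (fun m => SchwartzMap.seminorm ℝ m.1 m.2) g with hC
  refine ⟨ε, hε, K ^ (k + 2) * C, ?_⟩
  intro z hz t
  have h1 := one_add_le_sup_seminorm_apply (𝕜 := ℝ) (m := (k + 2, 0)) (k := k + 2) (n := 0)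
    le_rfl le_rfl g (z.1 + t • z.2)
  rw [norm_iteratedFDeriv_zero] at h1
  have h2 : (1 + |t|) ^ (k + 2) ≤ (K * (1 + ‖z.1 + t • z.2‖)) ^ (k + 2) :=
    pow_le_pow_left₀ (by positivity) (hb z hz t) _
  have h3 : (1 + |t|) ^ (k + 2) * ‖g (z.1 + t • z.2)‖ ≤ K ^ (k + 2) * C := by
    calc _ ≤ (K * (1 + ‖z.1 + t • z.2‖)) ^ (k + 2) * ‖g (z.1 + t • z.2)‖ := by gcongr
      _ = K ^ (k + 2) * ((1 + ‖z.1 + t • z.2‖) ^ (k + 2) * ‖g (z.1 + t • z.2)‖) := by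
        rw [mul_pow]; ring
      _ ≤ _ := by gcongr
  rw [← div_eq_mul_inv, le_div_iff₀ (by positivity)]
  refine le_trans ?_ h3
  have h4 : 1 + t ^ 2 ≤ (1 + |t|) ^ 2 := by
    nlinarith [abs_nonneg t, sq_abs t]
  calc (1 + |t|) ^ k * ‖g (z.1 + t • z.2)‖ * (1 + t ^ 2)
      ≤ (1 + |t|) ^ k * ‖g (z.1 + t • z.2)‖ * (1 + |t|) ^ 2 := by gcongr
    _ = _ := by ring

lemma rayInt_integrable {n : ℕ} (q : ℕ) (g : SchwartzMap (En n) ℝ) (x ξ : En n) (h : ξ ≠ 0) :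
    Integrable (fun t : ℝ => t ^ q * g (x + t • ξ)) := by
  obtain ⟨ε, hε, C, hb⟩ := schwartz_bound g (x, ξ) h q
  refine Integrable.mono' (integrable_inv_one_add_sq.const_mul C) ?_ ?_
  · have := g.continuous
    exact (by fun_prop : Continuous fun t : ℝ => t ^ q * g (x + t • ξ)).aestronglyMeasurable
  · refine Filter.Eventually.of_forall fun t => ?_
    refine le_trans ?_ (hb (x, ξ) (Metric.mem_ball_self hε) t)
    rw [norm_mul, norm_pow, Real.norm_eq_abs]
    gcongr
    linarith [abs_nonneg t]

lemma fst_add_smul_snd_norm {n : ℕ} (t : ℝ) :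
    ‖ContinuousLinearMap.fst ℝ (En n) (En n) + t • ContinuousLinearMap.snd ℝ (En n) (En n)‖
      ≤ 1 + |t| := by
  refine (norm_add_le _ _).trans ?_
  rw [norm_smul, Real.norm_eq_abs]
  have h1 := ContinuousLinearMap.norm_fst_le ℝ (En n) (En n)
  have h2 := ContinuousLinearMap.norm_snd_le ℝ (En n) (En n)
  nlinarith [abs_nonneg t]

/-- The derivative of the integrand. -/
def rayDer {n : ℕ} (q : ℕ) (g : SchwartzMap (En n) ℝ) (z : En n × En n) (t : ℝ) :
    En n × En n →L[ℝ] ℝ :=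
  t ^ q • (fderiv ℝ g (z.1 + t • z.2)).comp
    (ContinuousLinearMap.fst ℝ (En n) (En n) + t • ContinuousLinearMap.snd ℝ (En n) (En n))

lemma rayDer_cont {n : ℕ} (q : ℕ) (g : SchwartzMap (En n) ℝ) (z : En n × En n) :
    Continuous (rayDer q g z) := by
  have h : Continuous (fderiv ℝ g) := by
    have := (fderivCLM ℝ (En n) ℝ g).continuous
    exact this
  unfold rayDer
  fun_prop

lemma rayDer_norm {n : ℕ} (q : ℕ) (g : SchwartzMap (En n) ℝ) (z : En n × En n) (t : ℝ) :
    ‖rayDer q g z t‖ ≤ (1 + |t|) ^ (q + 1) * ‖fderivCLM ℝ (En n) ℝ g (z.1 + t • z.2)‖ := by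
  unfold rayDer
  rw [norm_smul, fderivCLM_apply, norm_pow, Real.norm_eq_abs]
  calc |t| ^ q * _ ≤ (1 + |t|) ^ q * (‖fderiv ℝ g (z.1 + t • z.2)‖ * (1 + |t|)) := by
        gcongr
        · linarith [abs_nonneg t]
        · refine (ContinuousLinearMap.opNorm_comp_le _ _).trans ?_
          gcongr
          exact fst_add_smul_snd_norm t
    _ = _ := by ring

lemma rayDer_integrable {n : ℕ} (q : ℕ) (g : SchwartzMap (En n) ℝ) (z : En n × En n)
    (h : z.2 ≠ 0) : Integrable (rayDer q g z) := by
  obtain ⟨ε, hε, C, hb⟩ := schwartz_bound (fderivCLM ℝ (En n) ℝ g) z h (q + 1)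
  refine Integrable.mono' (integrable_inv_one_add_sq.const_mul C)
    (rayDer_cont q g z).aestronglyMeasurable ?_
  exact Filter.Eventually.of_forall fun t =>
    (rayDer_norm q g z t).trans (hb z (Metric.mem_ball_self hε) t)

lemma rayInt_hasFDerivAt {n : ℕ} (q : ℕ) (g : SchwartzMap (En n) ℝ) (z : En n × En n)
    (h : z.2 ≠ 0) : HasFDerivAt (rayInt q g) (∫ t, rayDer q g z t) z := by
  obtain ⟨ε, hε, C, hb⟩ := schwartz_bound (fderivCLM ℝ (En n) ℝ g) z h (q + 1)
  refine hasFDerivAt_integral_of_dominated_of_fderiv_le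
    (F := fun z t => t ^ q * g (z.1 + t • z.2)) (F' := rayDer q g)
    (bound := fun t => C * (1 + t ^ 2)⁻¹) (Metric.ball_mem_nhds z hε) ?_
    (rayInt_integrable q g z.1 z.2 h) (rayDer_cont q g z).aestronglyMeasurable ?_
    (integrable_inv_one_add_sq.const_mul C) ?_
  · refine Filter.Eventually.of_forall fun z => ?_
    have := g.continuous
    exact (by fun_prop : Continuous fun t : ℝ => t ^ q * g (z.1 + t • z.2)).aestronglyMeasurable
  · exact Filter.Eventually.of_forall fun t z hz => (rayDer_norm q g z t).trans (hb z hz t)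
  · refine Filter.Eventually.of_forall fun t z hz => ?_
    have h1 : HasFDerivAt (fun z : En n × En n => z.1 + t • z.2)
        (ContinuousLinearMap.fst ℝ (En n) (En n) + t • ContinuousLinearMap.snd ℝ (En n) (En n))
        z :=
      (ContinuousLinearMap.fst ℝ (En n) (En n) +
        t • ContinuousLinearMap.snd ℝ (En n) (En n)).hasFDerivAt
    have h2 : HasFDerivAt g (fderiv ℝ g (z.1 + t • z.2)) (z.1 + t • z.2) :=
      g.differentiableAt.hasFDerivAt
    have h3 := (h2.comp z h1).const_mul (t ^ q)
    exact h3

/-- Coordinate derivative on Schwartz functions, as a linear map. -/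
def sd {n : ℕ} (j : Fin n) : SchwartzMap (En n) ℝ →ₗ[ℝ] SchwartzMap (En n) ℝ :=
  (SchwartzMap.evalCLM ℝ (En n) ℝ (EuclideanSpace.single j 1) ∘L fderivCLM ℝ (En n) ℝ :
    SchwartzMap (En n) ℝ →L[ℝ] SchwartzMap (En n) ℝ)

lemma sd_apply {n : ℕ} (j : Fin n) (g : SchwartzMap (En n) ℝ) (x : En n) :
    sd j g x = fderiv ℝ g x (EuclideanSpace.single j 1) := rfl

lemma sd_comm {n : ℕ} (j k : Fin n) : sd j * sd k = sd k * sd j := by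
  have key : ∀ (j k : Fin n) (g : SchwartzMap (En n) ℝ) (x : En n), sd j (sd k g) x =
      fderiv ℝ (fderiv ℝ g) x (EuclideanSpace.single j 1) (EuclideanSpace.single k 1) := by
    intro j k g x
    rw [sd_apply]
    have h1 : (⇑(sd k g) : En n → ℝ) = fun y => fderiv ℝ g y (EuclideanSpace.single k 1) := rfl
    have h2 : DifferentiableAt ℝ (fderiv ℝ g) x :=
      (fderivCLM ℝ (En n) ℝ g).differentiableAt
    rw [h1, fderiv_clm_apply h2 (by fun_prop)]
    simp
  ext g x
  change sd j (sd k g) x = sd k (sd j g) x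
  rw [key, key]
  have : IsSymmSndFDerivAt ℝ g x := by
    refine ContDiffAt.isSymmSndFDerivAt (n := 2) ((g.smooth 2).contDiffAt) ?_
    simp
  exact this _ _

lemma rayDer_x {n : ℕ} (q : ℕ) (g : SchwartzMap (En n) ℝ) (z : En n × En n)
    (h : z.2 ≠ 0) (j : Fin n) :
    (∫ t, rayDer q g z t) (EuclideanSpace.single j 1, 0) = rayInt q (sd j g) z := by
  rw [ContinuousLinearMap.integral_apply (rayDer_integrable q g z h)]
  simp [rayInt, rayDer, sd_apply]

lemma rayDer_xi {n : ℕ} (q : ℕ) (g : SchwartzMap (En n) ℝ) (z : En n × En n)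
    (h : z.2 ≠ 0) (j : Fin n) :
    (∫ t, rayDer q g z t) (0, EuclideanSpace.single j 1) = rayInt (q + 1) (sd j g) z := by
  rw [ContinuousLinearMap.integral_apply (rayDer_integrable q g z h)]
  simp [rayInt, rayDer, sd_apply, pow_succ, mul_assoc]

end MRT
namespace MRT

lemma list_part {R : Type*} [CommRing R] (r : ℕ) (p : ℕ) (a b : Fin r → R) :
    (((List.finRange r).take p).map a).prod * (((List.finRange r).drop p).map b).prod
      = ∏ s, if s ∈ ((List.finRange r).take p).toFinset then a s else b s := by
  have hnd : (List.finRange r).Nodup := List.nodup_finRange r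
  have hsplit := List.take_append_drop p (List.finRange r)
  have hdis : ∀ s ∈ (List.finRange r).drop p, s ∉ (List.finRange r).take p := by
    intro s hs hs'
    rw [← hsplit, List.nodup_append] at hnd
    exact hnd.2.2 s hs' s hs rfl
  rw [← List.prod_ofFn, List.ofFn_eq_map]
  conv_rhs => rw [← hsplit, List.map_append, List.prod_append]
  congr 2
  · apply List.map_congr_left
    intro s hs
    rw [if_pos]
    rw [hsplit]
    simpa using hs
  · apply List.map_congr_left
    intro s hs
    rw [if_neg]
    rw [hsplit]
    simpa using hdis s hs

lemma take_card (r p : ℕ) (hp : p ≤ r) : ((List.finRange r).take p).toFinset.card = p := by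
  rw [List.toFinset_card_of_nodup]
  · simpa using hp
  · exact (List.nodup_finRange r).sublist (List.take_sublist _ _)

/-- Symmetrized sum attached to a subset. -/
def hsum {R : Type*} [CommRing R] {r : ℕ} (a b : Fin r → R) (A : Finset (Fin r)) : R :=
  ∑ π : Equiv.Perm (Fin r), ∏ s, if s ∈ A then a (π s) else b (π s)

lemma hsum_eq {R : Type*} [CommRing R] {r : ℕ} (a b : Fin r → R) (A B : Finset (Fin r))
    (h : A.card = B.card) : hsum a b A = hsum a b B := by
  let e : A ≃ B := Finset.equivOfCardEq h
  let σ : Equiv.Perm (Fin r) := Equiv.extendSubtype (p := (· ∈ A)) (q := (· ∈ B)) e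
  have hσ : ∀ s, σ s ∈ B ↔ s ∈ A := by
    intro s
    constructor
    · intro h1
      by_contra h2
      exact Equiv.extendSubtype_not_mem (p := (· ∈ A)) (q := (· ∈ B)) e s h2 h1
    · intro h1
      exact Equiv.extendSubtype_mem (p := (· ∈ A)) (q := (· ∈ B)) e s h1
  unfold hsum
  rw [← Equiv.sum_comp (Equiv.mulRight σ)]
  refine Finset.sum_congr rfl fun π _ => ?_
  conv_rhs => rw [← Equiv.prod_comp σ]
  refine Finset.prod_congr rfl fun s _ => ?_
  simp [hσ]

lemma comb {R : Type*} [CommRing R] (r : ℕ) (a b : Fin r → R) :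
    ∑ π : Equiv.Perm (Fin r), ∑ p ∈ Finset.range (r + 1), (r.choose p : R) *
      ((((List.finRange r).take p).map (fun s => a (π s))).prod *
        (((List.finRange r).drop p).map (fun s => b (π s))).prod)
      = (r.factorial : R) * ∏ s, (a s + b s) := by
  have h1 : (r.factorial : R) * ∏ s, (a s + b s)
      = ∑ A ∈ (Finset.univ : Finset (Fin r)).powerset, hsum a b A := by
    unfold hsum
    rw [Finset.sum_comm]
    have : ∀ π : Equiv.Perm (Fin r), (∑ A ∈ (Finset.univ : Finset (Fin r)).powerset,
        ∏ s, if s ∈ A then a (π s) else b (π s)) = ∏ s, (a s + b s) := by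
      intro π
      rw [← Equiv.prod_comp π, Finset.prod_add]
      refine Finset.sum_congr rfl fun A _ => ?_
      have := Finset.prod_piecewise Finset.univ A (fun s => a (π s)) (fun s => b (π s))
      rw [Finset.univ_inter] at this
      rw [← this]
      rfl
    rw [Finset.sum_congr rfl (fun π _ => this π)]
    simp [Fintype.card_perm]
  rw [h1]
  have h2 : ∀ A ∈ (Finset.univ : Finset (Fin r)).powerset, hsum a b A =
      (fun p => hsum a b ((List.finRange r).take p).toFinset) A.card := by
    intro A _
    refine hsum_eq a b _ _ ?_
    rw [take_card]
    simpa using Finset.card_le_univ A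
  rw [Finset.sum_congr rfl h2, Finset.sum_powerset_apply_card
    (fun p => hsum a b ((List.finRange r).take p).toFinset), Finset.sum_comm]
  simp only [Finset.card_univ, Fintype.card_fin, nsmul_eq_mul]
  refine Finset.sum_congr rfl fun p _ => ?_
  rw [← Finset.mul_sum]
  congr 1
  refine Finset.sum_congr rfl fun π _ => ?_
  exact list_part r p _ _

lemma comb2 {R ι : Type*} [CommRing R] (r : ℕ) (x y : ι → R) (t : R) (idx : Fin r → ι) :
    ∑ π : Equiv.Perm (Fin r), ∑ p ∈ Finset.range (r + 1), ((-1) ^ p * (r.choose p : R)) *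
      (((((List.finRange r).take p).map (fun s => idx (π s))).map x).prod *
        ((((List.finRange r).drop p).map (fun s => idx (π s))).map y).prod * t ^ p)
      = (r.factorial : R) * ((List.finRange r).map (fun s => y (idx s) - t * x (idx s))).prod := by
  have := comb r (fun s => (-t) * x (idx s)) (fun s => y (idx s))
  have e : ((List.finRange r).map (fun s => y (idx s) - t * x (idx s))).prod
      = ∏ s, ((-t) * x (idx s) + y (idx s)) := by
    rw [← List.prod_ofFn, List.ofFn_eq_map]
    congr 2
    ext s
    ring
  rw [e, ← this]
  refine Finset.sum_congr rfl fun π _ => Finset.sum_congr rfl fun p hp => ?_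
  have hp' : p ≤ r := by simpa [Nat.lt_succ_iff] using hp
  have : (((List.finRange r).take p).map (fun s => (-t) * x (idx (π s)))).prod
      = (-t) ^ p * (((List.finRange r).take p).map (fun s => x (idx (π s)))).prod := by
    rw [List.prod_map_mul]
    simp [hp']
  rw [this, List.map_map, List.map_map, neg_pow]
  simp only [Function.comp_def]
  ring

end MRT
namespace MRT

open TensorProduct

lemma comb_comm {A ι : Type*} [Ring A] [Algebra ℝ A] (x d : ι → A) (t : A)
    (hxx : ∀ i j, x i * x j = x j * x i) (hdd : ∀ i j, d i * d j = d j * d i)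
    (hxd : ∀ i j, x i * d j = d j * x i) (hxt : ∀ i, x i * t = t * x i)
    (hdt : ∀ i, d i * t = t * d i) (r : ℕ) (idx : Fin r → ι) :
    ∑ π : Equiv.Perm (Fin r), ∑ p ∈ Finset.range (r + 1), ((-1) ^ p * (r.choose p : A)) *
      (((((List.finRange r).take p).map (fun s => idx (π s))).map x).prod *
        ((((List.finRange r).drop p).map (fun s => idx (π s))).map
          (fun i => t * x i + d i)).prod * t ^ p)
      = (r.factorial : A) * ((List.finRange r).map (fun s => d (idx s))).prod := by
  let S : Set A := {t} ∪ Set.range x ∪ Set.range d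
  have hcomm : ∀ a ∈ S, ∀ b ∈ S, a * b = b * a := by
    rintro a ((rfl | ⟨i, rfl⟩) | ⟨i, rfl⟩) b ((hb | ⟨j, rfl⟩) | ⟨j, rfl⟩)
    · rw [Set.mem_singleton_iff.mp hb]
    · rw [hxt]
    · rw [hdt]
    · rw [Set.mem_singleton_iff.mp hb, hxt]
    · rw [hxx]
    · rw [hxd]
    · rw [Set.mem_singleton_iff.mp hb, hdt]
    · rw [hxd]
    · rw [hdd]
  let _ : CommRing (Algebra.adjoin ℝ S) := Algebra.adjoinCommRingOfComm ℝ hcomm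
  let t' : Algebra.adjoin ℝ S := ⟨t, Algebra.subset_adjoin (by simp [S])⟩
  let x' : ι → Algebra.adjoin ℝ S := fun i => ⟨x i, Algebra.subset_adjoin (by simp [S])⟩
  let d' : ι → Algebra.adjoin ℝ S := fun i => ⟨d i, Algebra.subset_adjoin (by simp [S])⟩
  have h := comb2 r x' (fun i => t' * x' i + d' i) t' idx
  let φ : Algebra.adjoin ℝ S →+* A := (Algebra.adjoin ℝ S).val.toRingHom
  have h' := congrArg φ h
  simp only [add_sub_cancel_left] at h'
  simp only [map_sum, map_mul, map_pow, map_neg, map_one, map_natCast, map_list_prod,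
    List.map_map] at h'
  simp only [List.map_map]
  exact h'

lemma comb_comm' {A ι : Type*} [Semiring A] [Algebra ℝ A] (x d : ι → A) (t : A)
    (hxx : ∀ i j, x i * x j = x j * x i) (hdd : ∀ i j, d i * d j = d j * d i)
    (hxd : ∀ i j, x i * d j = d j * x i) (hxt : ∀ i, x i * t = t * x i)
    (hdt : ∀ i, d i * t = t * d i) (r : ℕ) (idx : Fin r → ι) :
    ∑ π : Equiv.Perm (Fin r), ∑ p ∈ Finset.range (r + 1), ((-1 : ℝ) ^ p * (r.choose p : ℝ)) •
      (((((List.finRange r).take p).map (fun s => idx (π s))).map x).prod *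
        ((((List.finRange r).drop p).map (fun s => idx (π s))).map
          (fun i => t * x i + d i)).prod * t ^ p)
      = (r.factorial : ℝ) • ((List.finRange r).map (fun s => d (idx s))).prod := by
  let _ : Ring A := Algebra.semiringToRing ℝ
  have h := comb_comm x d t hxx hdd hxd hxt hdt r idx
  simp only [Algebra.smul_def, map_mul, map_pow, map_neg, map_one, map_natCast]
  exact h

abbrev Tm (n : ℕ) := ℕ →₀ SchwartzMap (En n) ℝ
abbrev Mm (n : ℕ) := TensorProduct ℝ (Tm n) (MvPolynomial (Fin n) ℝ)

def shift (n : ℕ) : Tm n →ₗ[ℝ] Tm n := Finsupp.lmapDomain _ ℝ Nat.succ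
def tD {n : ℕ} (j : Fin n) : Tm n →ₗ[ℝ] Tm n := Finsupp.mapRange.linearMap (sd j)
def pD {n : ℕ} (j : Fin n) : MvPolynomial (Fin n) ℝ →ₗ[ℝ] MvPolynomial (Fin n) ℝ :=
  (MvPolynomial.pderiv j).toLinearMap

lemma shift_single {n : ℕ} (q : ℕ) (g : SchwartzMap (En n) ℝ) :
    shift n (Finsupp.single q g) = Finsupp.single (q + 1) g := by
  simp [shift]

lemma tD_single {n : ℕ} (j : Fin n) (q : ℕ) (g : SchwartzMap (En n) ℝ) :
    tD j (Finsupp.single q g) = Finsupp.single q (sd j g) := by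
  simp [tD]

lemma tD_comm {n : ℕ} (j k : Fin n) : tD j ∘ₗ tD k = tD k ∘ₗ tD j := by
  apply Finsupp.lhom_ext
  intro q g
  simp only [LinearMap.comp_apply, tD_single]
  exact congrArg _ (congrArg (fun L => L g) (sd_comm j k))

lemma tD_shift {n : ℕ} (j : Fin n) : tD j ∘ₗ shift n = shift n ∘ₗ tD j := by
  apply Finsupp.lhom_ext
  intro q g
  simp only [LinearMap.comp_apply, tD_single, shift_single]

lemma pD_comm {n : ℕ} (j k : Fin n) : pD j ∘ₗ pD k = pD k ∘ₗ pD j := by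
  have : ⁅(MvPolynomial.pderiv j : Derivation ℝ (MvPolynomial (Fin n) ℝ) (MvPolynomial (Fin n) ℝ)),
      (MvPolynomial.pderiv k : Derivation ℝ (MvPolynomial (Fin n) ℝ) (MvPolynomial (Fin n) ℝ))⁆
        = 0 := by
    apply MvPolynomial.derivation_ext
    intro i
    rw [Derivation.commutator_apply]
    simp [MvPolynomial.pderiv_X, Pi.single_apply, apply_ite]
  refine LinearMap.ext fun Q => ?_
  have h := congrArg (fun D : Derivation ℝ (MvPolynomial (Fin n) ℝ) (MvPolynomial (Fin n) ℝ) => D Q) this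
  simp only [Derivation.commutator_apply, Derivation.coe_zero, Pi.zero_apply, sub_eq_zero] at h
  exact h

def opS (n : ℕ) : Module.End ℝ (Mm n) := TensorProduct.map (shift n) LinearMap.id
def opX {n : ℕ} (j : Fin n) : Module.End ℝ (Mm n) := TensorProduct.map (tD j) LinearMap.id
def opP {n : ℕ} (j : Fin n) : Module.End ℝ (Mm n) := TensorProduct.map LinearMap.id (pD j)

lemma opX_comm {n : ℕ} (j k : Fin n) : opX j * opX k = opX k * opX j := by
  simp only [opX, Module.End.mul_eq_comp, ← TensorProduct.map_comp, tD_comm j k]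
lemma opP_comm {n : ℕ} (j k : Fin n) : opP j * opP k = opP k * opP j := by
  simp only [opP, Module.End.mul_eq_comp, ← TensorProduct.map_comp, pD_comm j k]
lemma opX_opP {n : ℕ} (j k : Fin n) : opX j * opP k = opP k * opX j := by
  simp only [opX, opP, Module.End.mul_eq_comp, ← TensorProduct.map_comp, LinearMap.comp_id,
    LinearMap.id_comp]
lemma opX_opS {n : ℕ} (j : Fin n) : opX j * opS n = opS n * opX j := by
  simp only [opX, opS, Module.End.mul_eq_comp, ← TensorProduct.map_comp, tD_shift j]
lemma opP_opS {n : ℕ} (j : Fin n) : opP j * opS n = opS n * opP j := by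
  simp only [opS, opP, Module.End.mul_eq_comp, ← TensorProduct.map_comp, LinearMap.comp_id,
    LinearMap.id_comp]

def opXi {n : ℕ} (j : Fin n) : Module.End ℝ (Mm n) := opS n * opX j + opP j

open Classical in
def rayL {n : ℕ} (q : ℕ) (z : En n × En n) : SchwartzMap (En n) ℝ →ₗ[ℝ] ℝ :=
  if h : z.2 ≠ 0 then
    { toFun := fun g => rayInt q g z
      map_add' := by
        intro g g'
        unfold rayInt
        rw [← integral_add (rayInt_integrable q g z.1 z.2 h) (rayInt_integrable q g' z.1 z.2 h)]
        simp [mul_add]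
      map_smul' := by
        intro c g
        unfold rayInt
        simp only [smul_apply, smul_eq_mul, RingHom.id_apply]
        rw [← integral_const_mul]
        congr 1
        ext t
        ring }
  else 0

lemma rayL_apply {n : ℕ} (q : ℕ) (z : En n × En n) (h : z.2 ≠ 0) (g : SchwartzMap (En n) ℝ) :
    rayL q z g = rayInt q g z := by
  simp [rayL, h]

def evT {n : ℕ} (z : En n × En n) : Tm n →ₗ[ℝ] ℝ := Finsupp.lsum ℝ (fun q => rayL q z)

lemma evT_single {n : ℕ} (z : En n × En n) (q : ℕ) (g : SchwartzMap (En n) ℝ) :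
    evT z (Finsupp.single q g) = rayL q z g := by
  simp [evT]

def evM {n : ℕ} (z : En n × En n) : Mm n →ₗ[ℝ] ℝ :=
  LinearMap.mul' ℝ ℝ ∘ₗ TensorProduct.map (evT z)
    (MvPolynomial.aeval (fun j => z.2 j) : MvPolynomial (Fin n) ℝ →ₐ[ℝ] ℝ).toLinearMap

lemma evM_tmul {n : ℕ} (z : En n × En n) (τ : Tm n) (Q : MvPolynomial (Fin n) ℝ) :
    evM z (τ ⊗ₜ Q) = evT z τ * MvPolynomial.eval (fun j => z.2 j) Q := by
  simp [evM, MvPolynomial.aeval_eq_eval]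

lemma eventually_ne {n : ℕ} (z : En n × En n) (h : z.2 ≠ 0) :
    ∀ᶠ w in nhds z, w.2 ≠ 0 :=
  (continuous_snd.continuousAt (x := z)).eventually_ne h

lemma evT_deriv {n : ℕ} (τ : Tm n) (z : En n × En n) (h : z.2 ≠ 0) :
    ∃ L : En n × En n →L[ℝ] ℝ, HasFDerivAt (fun w => evT w τ) L z ∧
      (∀ j, L (EuclideanSpace.single j 1, 0) = evT z (tD j τ)) ∧
      (∀ j, L (0, EuclideanSpace.single j 1) = evT z (shift n (tD j τ))) := by
  induction τ using Finsupp.induction_linear with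
  | zero => exact ⟨0, by simpa using hasFDerivAt_const (0 : ℝ) z, by simp, by simp⟩
  | add τ τ' h1 h2 =>
    obtain ⟨L, hL, hx, hxi⟩ := h1
    obtain ⟨L', hL', hx', hxi'⟩ := h2
    refine ⟨L + L', ?_, ?_, ?_⟩
    · simp only [map_add]
      exact hL.add hL'
    · intro j
      simp [hx, hx']
    · intro j
      simp [hxi, hxi']
  | single q g =>
    refine ⟨_, (rayInt_hasFDerivAt q g z h).congr_of_eventuallyEq ?_, ?_, ?_⟩
    · filter_upwards [eventually_ne z h] with w hw
      rw [evT_single, rayL_apply q w hw]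
    · intro j
      rw [rayDer_x q g z h, tD_single, evT_single, rayL_apply q z h]
    · intro j
      rw [rayDer_xi q g z h, tD_single, shift_single, evT_single, rayL_apply _ z h]

lemma poly_deriv {n : ℕ} (Q : MvPolynomial (Fin n) ℝ) (ξ : En n) :
    ∃ L : En n →L[ℝ] ℝ, HasFDerivAt (fun w : En n => MvPolynomial.eval (fun j => w j) Q) L ξ ∧
      (∀ j, L (EuclideanSpace.single j 1) = MvPolynomial.eval (fun j => ξ j) (pD j Q)) := by
  induction Q using MvPolynomial.induction_on with
  | C a => exact ⟨0, by simpa using hasFDerivAt_const a ξ, by simp [pD]⟩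
  | add P Q h1 h2 =>
    obtain ⟨L, hL, hx⟩ := h1
    obtain ⟨L', hL', hx'⟩ := h2
    refine ⟨L + L', ?_, ?_⟩
    · simp only [map_add]
      exact hL.add hL'
    · intro j
      simp [hx, hx']
  | mul_X P i h1 =>
    obtain ⟨L, hL, hx⟩ := h1
    have h2 : HasFDerivAt (fun w : En n => w i) (EuclideanSpace.proj i : En n →L[ℝ] ℝ) ξ :=
      (EuclideanSpace.proj i : En n →L[ℝ] ℝ).hasFDerivAt
    refine ⟨_, (hL.mul h2).congr_of_eventuallyEq (Filter.Eventually.of_forall fun w => by simp), ?_⟩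
    intro j
    simp only [pD] at hx ⊢
    simp [hx, MvPolynomial.pderiv_X, Pi.single_apply, apply_ite]

lemma evM_deriv {n : ℕ} (u : Mm n) (z : En n × En n) (h : z.2 ≠ 0) :
    ∃ L : En n × En n →L[ℝ] ℝ, HasFDerivAt (fun w => evM w u) L z ∧
      (∀ j, L (EuclideanSpace.single j 1, 0) = evM z (opX j u)) ∧
      (∀ j, L (0, EuclideanSpace.single j 1) = evM z (opXi j u)) := by
  induction u using TensorProduct.induction_on with
  | zero => exact ⟨0, by simpa using hasFDerivAt_const (0 : ℝ) z, by simp, by simp⟩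
  | add τ τ' h1 h2 =>
    obtain ⟨L, hL, hx, hxi⟩ := h1
    obtain ⟨L', hL', hx', hxi'⟩ := h2
    refine ⟨L + L', ?_, ?_, ?_⟩
    · simp only [map_add]
      exact hL.add hL'
    · intro j
      simp [hx, hx']
    · intro j
      simp [hxi, hxi']
  | tmul τ Q =>
    obtain ⟨L, hL, hx, hxi⟩ := evT_deriv τ z h
    obtain ⟨L', hL', hx'⟩ := poly_deriv Q z.2
    have h2 := hL'.comp z (hasFDerivAt_snd (𝕜 := ℝ) (p := z))
    have h3 := hL.mul h2
    refine ⟨_, h3.congr_of_eventuallyEq (Filter.Eventually.of_forall fun w => evM_tmul w τ Q),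
      ?_, ?_⟩
    · intro j
      simp [opX, evM_tmul, hx]
      ring
    · intro j
      simp [opXi, opX, opS, opP, evM_tmul, hxi, hx']
      ring

/-- `F` is represented by `u` on the set `ξ ≠ 0`. -/
def Rep {n : ℕ} (F : En n → En n → ℝ) (u : Mm n) : Prop :=
  ∀ x ξ, ξ ≠ 0 → F x ξ = evM (x, ξ) u

lemma Rep.pdx {n : ℕ} {F : En n → En n → ℝ} {u : Mm n} (h : Rep F u) (j : Fin n) :
    Rep (pdx j F) (opX j u) := by
  intro x ξ hξ
  obtain ⟨L, hL, hx, -⟩ := evM_deriv u (x, ξ) hξ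
  have e : (fun x' => F x' ξ) = fun x' => evM (x', ξ) u := funext fun x' => h x' ξ hξ
  have h1 : HasFDerivAt (fun x' : En n => (x', ξ))
      ((ContinuousLinearMap.id ℝ (En n)).prod (0 : En n →L[ℝ] En n)) x :=
    (hasFDerivAt_id x).prodMk (hasFDerivAt_const ξ x)
  have h2 : HasFDerivAt (fun x' => evM (x', ξ) u) _ x := HasFDerivAt.comp (g := fun w => evM w u) x hL h1
  unfold _root_.pdx
  rw [e, h2.fderiv, ← hx]
  simp

lemma Rep.pdxi {n : ℕ} {F : En n → En n → ℝ} {u : Mm n} (h : Rep F u) (j : Fin n) :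
    Rep (pdxi j F) (opXi j u) := by
  intro x ξ hξ
  obtain ⟨L, hL, -, hx⟩ := evM_deriv u (x, ξ) hξ
  have e : (fun ξ' => F x ξ') =ᶠ[nhds ξ] fun ξ' => evM (x, ξ') u := by
    filter_upwards [isOpen_ne.mem_nhds hξ] with ξ' hξ'
    exact h x ξ' hξ'
  have h1 : HasFDerivAt (fun ξ' : En n => (x, ξ'))
      ((0 : En n →L[ℝ] En n).prod (ContinuousLinearMap.id ℝ (En n))) ξ :=
    (hasFDerivAt_const x ξ).prodMk (hasFDerivAt_id ξ)
  have h2 : HasFDerivAt (fun ξ' => evM (x, ξ') u) _ ξ := HasFDerivAt.comp (g := fun w => evM w u) ξ hL h1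
  unfold _root_.pdxi
  rw [e.fderiv_eq, h2.fderiv, ← hx]
  simp

lemma Rep.pdxList {n : ℕ} {F : En n → En n → ℝ} {u : Mm n} (h : Rep F u) (l : List (Fin n)) :
    Rep (pdxList l F) ((l.map opX).prod u) := by
  induction l with
  | nil => simpa [_root_.pdxList] using h
  | cons a l ih => simpa [_root_.pdxList] using ih.pdx a

lemma Rep.pdxiList {n : ℕ} {F : En n → En n → ℝ} {u : Mm n} (h : Rep F u) (l : List (Fin n)) :
    Rep (pdxiList l F) ((l.map opXi).prod u) := by
  induction l with
  | nil => simpa [_root_.pdxiList] using h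
  | cons a l ih => simpa [_root_.pdxiList] using ih.pdxi a

/-- The formal element attached to a Schwartz tensor field. -/
def formal {n m : ℕ} (q : ℕ) (φ : (Fin m → Fin n) → SchwartzMap (En n) ℝ) : Mm n :=
  ∑ i, (Finsupp.single q (φ i) : Tm n) ⊗ₜ (∏ s, MvPolynomial.X (i s))

lemma rep_momRT {n m : ℕ} (q : ℕ) (φ : (Fin m → Fin n) → SchwartzMap (En n) ℝ) :
    Rep (momRT q (fun i => φ i)) (formal q φ) := by
  intro x ξ hξ
  unfold momRT formal
  simp only [Finset.mul_sum, map_sum]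
  rw [integral_finsetSum]
  · refine Finset.sum_congr rfl fun i _ => ?_
    rw [evM_tmul, evT_single, rayL_apply _ (x, ξ) hξ]
    simp only [rayInt, map_prod, MvPolynomial.eval_X]
    rw [← integral_mul_const]
    simp only [mul_assoc]
  · intro i _
    simp only [← mul_assoc]
    exact (rayInt_integrable q (φ i) x ξ hξ).mul_const _

lemma opS_formal {n m : ℕ} (p q : ℕ) (φ : (Fin m → Fin n) → SchwartzMap (En n) ℝ) :
    (opS n ^ p) (formal q φ) = formal (q + p) φ := by
  induction p with
  | zero => simp
  | succ p ih =>
    rw [pow_succ', Module.End.mul_apply, ih]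
    simp [formal, opS, shift_single, add_assoc]

lemma pD_prod {n k : ℕ} (a : Fin n) (i : Fin (k + 1) → Fin n) :
    pD a (∏ s, MvPolynomial.X (i s)) =
      ∑ s, if i s = a then ∏ s', MvPolynomial.X (i (s.succAbove s')) else 0 := by
  unfold pD
  induction k with
  | zero =>
    rw [Fin.sum_univ_succ, Fin.prod_univ_succ]
    simp [MvPolynomial.pderiv_X, Pi.single_apply]
  | succ k ih =>
    rw [Fin.prod_univ_succ]
    have := ih (fun s => i s.succ)
    simp only [Derivation.coeFn_coe] at this ⊢
    rw [Derivation.leibniz, this, Fin.sum_univ_succ (n := k + 1), MvPolynomial.pderiv_X,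
      Finset.smul_sum, add_comm]
    congr 1
    · simp [Pi.single_apply]
    · refine Finset.sum_congr rfl fun s _ => ?_
      rw [Fin.prod_univ_succ]
      simp

lemma opP_formal {n k : ℕ} (a : Fin n) (φ : (Fin (k + 1) → Fin n) → SchwartzMap (En n) ℝ)
    (hφ : ∀ (π : Equiv.Perm (Fin (k + 1))) i, φ (i ∘ π) = φ i) (q : ℕ) :
    opP a (formal q φ) = ((k + 1 : ℕ) : ℝ) • formal q (fun j => φ (Fin.cons a j)) := by
  unfold formal
  simp only [map_sum, opP, TensorProduct.map_tmul, LinearMap.id_apply, pD_prod,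
    TensorProduct.tmul_sum]
  rw [Finset.sum_comm]
  have : ∀ s : Fin (k + 1), (∑ i : Fin (k + 1) → Fin n, (Finsupp.single q (φ i) : Tm n) ⊗ₜ[ℝ]
      (if i s = a then ∏ s', (MvPolynomial.X (i (s.succAbove s')) : MvPolynomial (Fin n) ℝ)
        else 0))
      = ∑ j : Fin k → Fin n, (Finsupp.single q (φ (Fin.cons a j)) : Tm n) ⊗ₜ[ℝ]
        (∏ s', (MvPolynomial.X (j s') : MvPolynomial (Fin n) ℝ)) := by
    intro s
    rw [← Equiv.sum_comp (Fin.insertNthEquiv (fun _ => Fin n) s), Fintype.sum_prod_type]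
    rw [Finset.sum_eq_single a]
    · refine Finset.sum_congr rfl fun j _ => ?_
      have e : φ (Fin.insertNth s a j) = φ (Fin.cons a j) := by
        rw [← Fin.cons_comp_cycleRange, hφ]
      simp [Fin.insertNthEquiv, e]
    · intro b _ hb
      simp [Fin.insertNthEquiv, hb]
    · simp
  rw [Finset.sum_congr rfl (fun s _ => this s)]
  simp [← Nat.cast_smul_eq_nsmul ℝ]

lemma opP_list {n : ℕ} (p' : ℕ) : ∀ (r m : ℕ) (h : m = r + p')
    (φ : (Fin m → Fin n) → SchwartzMap (En n) ℝ)
    (_ : ∀ (π : Equiv.Perm (Fin m)) i, φ (i ∘ π) = φ i) (idx : Fin r → Fin n),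
    ((List.finRange r).map (fun s => opP (idx s))).prod (formal 0 φ)
      = ((m.factorial : ℝ) / p'.factorial) •
        formal 0 (fun j => φ (Fin.append idx j ∘ Fin.cast h)) := by
  intro r
  induction r with
  | zero =>
    intro m h φ hφ idx
    obtain rfl : m = p' := by omega
    have e : ∀ j : Fin m → Fin n, Fin.append idx j ∘ Fin.cast h = j := by
      intro j
      obtain rfl : idx = Fin.elim0 := Subsingleton.elim _ _
      rw [Fin.elim0_append]
      rfl
    have : (m.factorial : ℝ) ≠ 0 := by positivity
    simp [e, div_self this]
  | succ r ih =>
    intro m h φ hφ idx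
    obtain rfl : m = (r + p') + 1 := by omega
    have hc : Commute (opP (idx 0))
        ((List.finRange r).map (fun s => opP (idx s.succ))).prod := by
      apply Commute.list_prod_right
      intro y hy
      obtain ⟨s, -, rfl⟩ := List.mem_map.mp hy
      exact opP_comm _ _
    rw [List.finRange_succ, List.map_cons, List.prod_cons, List.map_map]
    change (opP (idx 0) * ((List.finRange r).map (fun s => opP (idx s.succ))).prod) _ = _
    rw [hc.eq, Module.End.mul_apply, opP_formal _ _ hφ, map_smul,
      ih (r + p') rfl (fun j => φ (Fin.cons (idx 0) j)) ?_ (fun s => idx s.succ), smul_smul]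
    · congr 1
      · rw [Nat.factorial_succ]
        push_cast
        ring
      · congr 1
        ext1 j
        congr 1
        have := Fin.append_cons (idx 0) (fun s => idx s.succ) j
        rw [show Fin.cons (idx 0) (fun s => idx s.succ) = idx from Fin.cons_self_tail idx] at this
        rw [this]
        rfl
    · intro π j
      rw [← hφ (Equiv.Perm.decomposeFin.symm (0, π)) (Fin.cons (idx 0) j)]
      congr 1
      ext1 s
      refine Fin.cases ?_ (fun s => ?_) s
      · simp
      · simp

end MRT

/-- recovering `J^0` of the restricted tensor field `f_{m−r}`
(obtained by fixing the first `r` indices of `f` to `idx`) from `J^0f, …, J^rf`: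
`(J^0 f_{m−r})_{i₁…i_r} = ((m−r)!/m!) σ(i₁…i_r) Σ_{p=0}^r (−1)^p C(r,p)
∂^r (J^p f)/(∂x^{i₁}⋯∂x^{i_p} ∂ξ^{i_{p+1}}⋯∂ξ^{i_r})`.
The rank is `m = r + p'` and `σ` is the average over permutations of the fixed
indices. -/
theorem momRT_inversion_of_restricted_field
    (n r p' : ℕ)
    (f : (Fin (r + p') → Fin n) → En n → ℝ)
    (hf : IsSchwartzField f) (hfsym : IsSymField f)
    (idx : Fin r → Fin n) :
    ∀ x ξ : En n, ξ ≠ 0 →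
      momRT 0 (fun j : Fin p' → Fin n => f (Fin.append idx j)) x ξ
        = ((p'.factorial : ℝ) / ((r + p').factorial)) * ((r.factorial : ℝ))⁻¹ *
          ∑ π : Equiv.Perm (Fin r), ∑ p ∈ Finset.range (r + 1),
            (-1 : ℝ) ^ p * (r.choose p) *
              pdxList (((List.finRange r).take p).map (fun s => idx (π s)))
                (pdxiList (((List.finRange r).drop p).map (fun s => idx (π s)))
                  (momRT p f)) x ξ := by
  intro x ξ hξ
  choose φ hφ using hf
  obtain rfl : f = fun i => ⇑(φ i) := funext fun i => (hφ i).symm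
  have hsym : ∀ (π : Equiv.Perm (Fin (r + p'))) i, φ (i ∘ π) = φ i := by
    intro π i
    exact DFunLike.coe_injective (hfsym π i)
  have hrep : ∀ (l l' : List (Fin n)) (p : ℕ),
      pdxList l (pdxiList l' (momRT p (fun i => ⇑(φ i)))) x ξ
        = MRT.evM (x, ξ) (((l.map MRT.opX).prod * (l'.map MRT.opXi).prod * MRT.opS n ^ p)
            (MRT.formal 0 φ)) := by
    intro l l' p
    have h1 := MRT.rep_momRT p φ
    have h2 := MRT.opS_formal p 0 φ
    rw [zero_add] at h2
    rw [← h2] at h1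
    exact ((h1.pdxiList l').pdxList l) x ξ hξ
  have hcomb := MRT.comb_comm' (MRT.opX (n := n)) MRT.opP (MRT.opS n) MRT.opX_comm MRT.opP_comm
    MRT.opX_opP MRT.opX_opS MRT.opP_opS r idx
  have h3 := congrArg (fun L : Module.End ℝ (MRT.Mm n) => MRT.evM (x, ξ) (L (MRT.formal 0 φ)))
    hcomb
  simp only [LinearMap.sum_apply, map_sum, LinearMap.smul_apply, map_smul] at h3
  rw [MRT.opP_list p' r (r + p') rfl φ hsym idx, map_smul] at h3
  simp only [smul_eq_mul] at h3
  have h4 := MRT.rep_momRT 0 (fun j : Fin p' → Fin n => φ (Fin.append idx j)) x ξ hξ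
  simp only [hrep]
  rw [h4]
  have h5 : (fun j : Fin p' → Fin n => φ (Fin.append idx j ∘ Fin.cast rfl))
      = fun j => φ (Fin.append idx j) := rfl
  rw [h5] at h3
  have e1 : (r.factorial : ℝ) ≠ 0 := by positivity
  have e2 : (p'.factorial : ℝ) ≠ 0 := by positivity
  have e3 : ((r + p').factorial : ℝ) ≠ 0 := by positivity
  refine Eq.trans ?_ (congrArg (fun y => ((p'.factorial : ℝ) / ((r + p').factorial)) *
    ((r.factorial : ℝ))⁻¹ * y) h3.symm)
  field_simp
end
end

section
/- Let n ≥ 2, let 0 ≤ k ≤ m−1, and let f ∈ 𝒮(S^m) be a symmetric m-tensor field on ℝⁿ with Schwartz components satisfying δ^{k+1} f = 0 (f is (k+1)-solenoidal). If I^ℓ f = 0 for every ℓ = 0, 1, …, k (i.e. 𝓘^k f = 0), then f ≡ 0. In other words, the operator 𝓘^k is injective on (k+1)-solenoidal Schwartz tensor fields. -/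
noncomputable section

open MeasureTheory Filter
open scoped RealInnerProductSpace BigOperators

/-- The `m`-linear form of a tensor with complex components, at real vectors. -/
def tform {n m : ℕ} (F : (Fin m → Fin n) → ℂ) (v : Fin m → En n) : ℂ :=
  ∑ i : Fin m → Fin n, F i * ∏ r, ((v r (i r) : ℝ) : ℂ)

lemma exists_perm_of_fiber {α β : Type*} [Fintype α] [DecidableEq β] (i j : α → β)
    (h : ∀ b, Fintype.card {a // i a = b} = Fintype.card {a // j a = b}) :
    ∃ π : Equiv.Perm α, i = j ∘ π := by
  classical
  let e : ∀ b, {a // i a = b} ≃ {a // j a = b} := fun b => Fintype.equivOfCardEq (h b)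
  refine ⟨(Equiv.sigmaFiberEquiv i).symm.trans ((Equiv.sigmaCongrRight e).trans
    (Equiv.sigmaFiberEquiv j)), ?_⟩
  funext a
  exact ((e (i a)) ⟨a, rfl⟩).2.symm

lemma polar_zero {n m : ℕ} (F : (Fin m → Fin n) → ℂ)
    (hs : ∀ (π : Equiv.Perm (Fin m)) (i : Fin m → Fin n), F (i ∘ π) = F i)
    (h : ∀ ξ : En n, tform F (fun _ => ξ) = 0) : ∀ i, F i = 0 := by
  classical
  intro i0
  let α : (Fin m → Fin n) → (Fin n →₀ ℕ) := fun i => ∑ r, Finsupp.single (i r) 1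
  let p : MvPolynomial (Fin n) ℂ := ∑ i, MvPolynomial.monomial (α i) (F i)
  have hp : p = 0 := by
    refine MvPolynomial.funext_set (fun _ => Set.range (fun x : ℝ => (x : ℂ)))
      (fun _ => Set.infinite_range_of_injective Complex.ofReal_injective) ?_
    intro x hx
    have : ∀ j, ∃ y : ℝ, (y : ℂ) = x j := fun j => hx j (Set.mem_univ j)
    choose y hy using this
    have := h (WithLp.toLp 2 y)
    rw [map_zero, ← this]
    simp only [p, tform, map_sum]
    refine Finset.sum_congr rfl fun i _ => ?_
    rw [MvPolynomial.monomial_eq, map_mul, MvPolynomial.eval_C]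
    congr 1
    have : (MvPolynomial.X (R := ℂ)  : Fin n → _) = MvPolynomial.X := rfl
    rw [← MvPolynomial.monic_monomial_eq]
    have e : (MvPolynomial.monomial (α i) (1:ℂ)) = ∏ r, MvPolynomial.X (i r) := by
      simp only [α, MvPolynomial.X]
      rw [MvPolynomial.monomial_sum_one]
    rw [e, map_prod]
    simp [hy]
  have hc := congrArg (MvPolynomial.coeff (α i0)) hp
  simp only [p, MvPolynomial.coeff_sum, MvPolynomial.coeff_monomial, MvPolynomial.coeff_zero] at hc
  have key : ∀ i, (if α i = α i0 then F i else 0) = (if α i = α i0 then 1 else 0) * F i0 := by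
    intro i
    split_ifs with hi
    · obtain ⟨π, hπ⟩ := exists_perm_of_fiber i i0 (by
        intro b
        have := DFunLike.congr_fun hi b
        simp only [α, Finsupp.finsetSum_apply, Finsupp.single_apply] at this
        simpa [Fintype.card_subtype] using this)
      rw [hπ, hs, one_mul]
    · simp
  simp only [key, ← Finset.sum_mul] at hc
  rcases mul_eq_zero.1 hc with h0 | h0
  · exfalso
    rw [Finset.sum_boole] at h0
    have : (Finset.univ.filter fun i => α i = α i0) = ∅ := by
      exact Finset.card_eq_zero.1 (by exact_mod_cast h0)
    have h1 : i0 ∈ (Finset.univ.filter fun i => α i = α i0) := by simp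
    rw [this] at h1
    simp at h1
  · exact h0

lemma tform_perm {n m : ℕ} (F : (Fin m → Fin n) → ℂ)
    (hs : ∀ (π : Equiv.Perm (Fin m)) (i : Fin m → Fin n), F (i ∘ π) = F i)
    (π : Equiv.Perm (Fin m)) (v : Fin m → En n) : tform F (v ∘ π) = tform F v := by
  unfold tform
  refine Fintype.sum_equiv (Equiv.arrowCongr π (Equiv.refl (Fin n))) _ _ fun i => ?_
  have e : (Equiv.arrowCongr π (Equiv.refl (Fin n))) i = i ∘ π.symm := rfl
  rw [e, hs]
  congr 1
  refine Fintype.prod_equiv π _ _ fun r => ?_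
  simp

/-- contraction of the last index with `y` -/
def ctr {n m : ℕ} (y : En n) (F : (Fin (m + 1) → Fin n) → ℂ) : (Fin m → Fin n) → ℂ :=
  fun i => ∑ j : Fin n, ((y j : ℝ) : ℂ) * F (Fin.snoc i j)

def ctrpow {n : ℕ} (y : En n) : (k : ℕ) → {p : ℕ} → ((Fin (p + k) → Fin n) → ℂ) →
    (Fin p → Fin n) → ℂ
  | 0, _, u => u
  | k + 1, _, u => ctrpow y k (ctr y u)

lemma tform_ctr {n m : ℕ} (F : (Fin (m + 1) → Fin n) → ℂ) (v : Fin (m + 1) → En n) :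
    tform F v = tform (ctr (v (Fin.last m)) F) (fun r => v r.castSucc) := by
  unfold tform ctr
  rw [← Equiv.sum_comp (Fin.snocEquiv (fun _ => Fin n)), Fintype.sum_prod_type, Finset.sum_comm]
  refine Finset.sum_congr rfl fun i _ => ?_
  rw [Finset.sum_mul]
  refine Finset.sum_congr rfl fun j _ => ?_
  rw [Fin.prod_univ_castSucc]
  simp [Fin.snocEquiv]
  ring

lemma tform_ctrpow {n : ℕ} (y : En n) (k : ℕ) : ∀ {p : ℕ} (F : (Fin (p + k) → Fin n) → ℂ)
    (v : Fin (p + k) → En n) (_ : ∀ r : Fin k, v (Fin.natAdd p r) = y),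
    tform F v = tform (ctrpow y k F) (fun r => v (Fin.castAdd k r)) := by
  induction k with
  | zero => intro p F v _; rfl
  | succ k ih =>
    intro p F v hv
    have h1 := tform_ctr (m := p + k) F v
    have h2 : v (Fin.last (p + k)) = y := hv (Fin.last k)
    rw [h2] at h1
    rw [h1, ih (ctr y F) (fun r => v r.castSucc) (fun r => hv r.castSucc)]
    rfl

lemma tform_solenoidal {n p k : ℕ} (y : En n) (F : (Fin (p + k) → Fin n) → ℂ)
    (hs : ∀ (π : Equiv.Perm (Fin (p + k))) (i : Fin (p + k) → Fin n), F (i ∘ π) = F i)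
    (h : ∀ i, ctrpow y k F i = 0) (S : Finset (Fin (p + k))) (hS : k ≤ S.card)
    (v : Fin (p + k) → En n) (hv : ∀ r ∈ S, v r = y) : tform F v = 0 := by
  classical
  obtain ⟨B, hBS, hB⟩ := Finset.exists_subset_card_eq hS
  let e : Fin k ≃ B := (Fintype.equivOfCardEq (by simp [hB]))
  have hinj : Function.Injective (Fin.natAdd p : Fin k → Fin (p + k)) := Fin.natAdd_injective k p
  obtain ⟨π, hπ⟩ : ∃ π : Equiv.Perm (Fin (p + k)), ∀ r : Fin k, π (Fin.natAdd p r) ∈ B := by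
    let e' : {x // x ∈ Set.range (Fin.natAdd p : Fin k → Fin (p + k))} ≃ {x // x ∈ B} :=
      (Equiv.ofInjective _ hinj).symm.trans e
    refine ⟨e'.extendSubtype, fun r => e'.extendSubtype_mem _ ⟨r, rfl⟩⟩
  rw [← tform_perm F hs π v, tform_ctrpow y k F (v ∘ π) (fun r => hv _ (hBS (hπ r)))]
  simp [tform, h]

/-- coefficients of the expansion -/
def acoef {n m : ℕ} (F : (Fin m → Fin n) → ℂ) (j : ℕ) (y w : En n) : ℂ :=
  ∑ S : Finset (Fin m), if S.card = j then tform F (fun r => if r ∈ S then y else w) else 0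

lemma tform_expand {n m : ℕ} (F : (Fin m → Fin n) → ℂ) (y w : En n) (s : ℝ) :
    tform F (fun _ => w + s • y) =
      ∑ S : Finset (Fin m), (s : ℂ) ^ S.card * tform F (fun r => if r ∈ S then y else w) := by
  classical
  unfold tform
  simp_rw [Finset.mul_sum]
  rw [Finset.sum_comm]
  refine Finset.sum_congr rfl fun i _ => ?_
  have : ∀ r, (((w + s • y) (i r) : ℝ) : ℂ) = (s : ℂ) * (y (i r) : ℂ) + (w (i r) : ℂ) := by
    intro r; simp; ring
  simp_rw [this]
  rw [Fintype.prod_add, Finset.mul_sum]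
  refine Finset.sum_congr rfl fun S _ => ?_
  have e : ∀ r, ((((if r ∈ S then y else w : En n) (i r) : ℝ)) : ℂ) = if r ∈ S then (y (i r) : ℂ) else w (i r) := by
    intro r; split_ifs <;> rfl
  simp_rw [e]
  rw [Finset.prod_ite, Finset.prod_mul_distrib, Finset.prod_const]
  have e1 : Finset.univ.filter (fun x => x ∈ S) = S := by ext; simp
  have e2 : Finset.univ.filter (fun x => x ∉ S) = Sᶜ := by ext; simp
  rw [e1, e2]
  ring

lemma tform_expand' {n p k : ℕ} (F : (Fin (p + k) → Fin n) → ℂ) (y w : En n) (s : ℝ)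
    (hs : ∀ (π : Equiv.Perm (Fin (p + k))) (i : Fin (p + k) → Fin n), F (i ∘ π) = F i)
    (h : ∀ i, ctrpow y k F i = 0)  :
    tform F (fun _ => w + s • y) = ∑ j ∈ Finset.range k, (s : ℂ) ^ j * acoef F j y w := by
  classical
  rw [tform_expand]
  unfold acoef
  simp_rw [Finset.mul_sum]
  rw [Finset.sum_comm]
  refine Finset.sum_congr rfl fun S _ => ?_
  by_cases hS : S.card < k
  · rw [Finset.sum_eq_single_of_mem S.card (Finset.mem_range.2 hS)]
    · simp
    · intro b _ hb
      rw [if_neg (Ne.symm hb), mul_zero]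
  · rw [tform_solenoidal y F hs h S (not_lt.1 hS) _ (fun r hr => if_pos hr)]
    simp
lemma integral_eq_zero_of_lines {n : ℕ} (ξ : En n) (hξ : ‖ξ‖ = 1) (h : En n → ℂ)
    (hc : Continuous h) (hi : Integrable h) (h0 : ∀ z, ∫ t : ℝ, h (z + t • ξ) = 0) :
    ∫ z, h z = 0 := by
  let ψ : ℝ → ℂ := fun t => ((Real.exp (-(1:ℝ) * t ^ 2) : ℝ) : ℂ)
  have hψi : Integrable ψ := (integrable_exp_neg_mul_sq one_pos).ofReal
  have hψc : Continuous ψ := by fun_prop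
  have hψ0 : ∫ t, ψ t ≠ 0 := by
    simp only [ψ]
    rw [integral_complex_ofReal, integral_gaussian]
    norm_cast
    positivity
  let H : ℝ × En n → ℂ := fun p => h p.2 * ψ (⟪p.2, ξ⟫ - p.1)
  have hHc : Continuous H := by fun_prop
  have hH : Integrable H (volume.prod volume) := by
    rw [integrable_prod_iff' hHc.aestronglyMeasurable]
    constructor
    · exact ae_of_all _ fun z => (hψi.comp_sub_left ⟪z, ξ⟫).const_mul (h z)
    · have : ∀ z, ∫ t, ‖H (t, z)‖ = ‖h z‖ * ∫ t, ‖ψ t‖ := by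
        intro z
        simp only [H, norm_mul]
        rw [integral_const_mul, integral_sub_left_eq_self (fun t => ‖ψ t‖)]
      simp only [this]
      exact hi.norm.mul_const _
  have hmp : MeasurePreserving (fun p : ℝ × En n => (p.1, p.2 + p.1 • ξ))
      (volume.prod volume) (volume.prod volume) := by
    refine MeasurePreserving.skew_product (f := id) (g := fun (t : ℝ) (z : En n) => z + t • ξ)
      (MeasurePreserving.id _) (by fun_prop) (ae_of_all _ fun t => ?_)
    exact (measurePreserving_add_right volume (t • ξ)).map_eq
  have hH2 : Integrable (fun p : ℝ × En n => H (p.1, p.2 + p.1 • ξ)) (volume.prod volume) :=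
    hmp.integrable_comp_of_integrable hH
  have e1 : ∫ t, ∫ z, H (t, z) = (∫ z, h z) * ∫ t, ψ t := by
    rw [integral_integral_swap hH]
    simp only [H]
    rw [← integral_mul_const]
    congr 1
    funext z
    rw [integral_const_mul, integral_sub_left_eq_self ψ]
  have e2 : ∫ t, ∫ z, H (t, z) = 0 := by
    have : ∀ t : ℝ, ∫ z, H (t, z) = ∫ z, H (t, z + t • ξ) := fun t =>
      (integral_add_right_eq_self (fun z => H (t, z)) (t • ξ)).symm
    simp only [this]
    rw [integral_integral_swap hH2]
    have : ∀ z, ∫ t : ℝ, H (t, z + t • ξ) = 0 := by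
      intro z
      have : ∀ t : ℝ, H (t, z + t • ξ) = h (z + t • ξ) * ψ ⟪z, ξ⟫ := by
        intro t
        simp [H, inner_add_left, inner_smul_left, hξ]
      simp only [this]
      rw [integral_mul_const, h0, zero_mul]
    simp [this]
  rw [e2] at e1
  exact (mul_eq_zero.1 e1.symm).resolve_right hψ0

lemma exp_remainder (k : ℕ) (v : ℝ) :
    ‖Complex.exp (v * Complex.I) - ∑ l ∈ Finset.range (k + 1), (v * Complex.I) ^ l / (l.factorial : ℂ)‖
      ≤ (k + 5) * |v| ^ (k + 1) := by
  have hn : ‖(v : ℂ) * Complex.I‖ = |v| := by simp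
  rcases le_total |v| 1 with hv | hv
  · refine (Complex.norm_exp_sub_sum_le_norm_mul_exp _ (k + 1)).trans ?_
    rw [hn, mul_comm]
    gcongr
    have := Real.exp_one_lt_d9
    have h2 : Real.exp |v| ≤ Real.exp 1 := Real.exp_le_exp.2 hv
    have : (0:ℝ) ≤ k := by positivity
    linarith
  · refine (norm_sub_le _ _).trans ?_
    rw [Complex.norm_exp_ofReal_mul_I]
    have h1 : ‖∑ l ∈ Finset.range (k + 1), ((v:ℂ) * Complex.I) ^ l / (l.factorial : ℂ)‖
        ≤ ∑ l ∈ Finset.range (k + 1), |v| ^ (k + 1) := by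
      refine norm_sum_le_of_le _ fun l hl => ?_
      rw [norm_div, norm_pow, hn, Complex.norm_natCast]
      refine (div_le_self (by positivity) (by exact_mod_cast Nat.one_le_iff_ne_zero.2 l.factorial_ne_zero)).trans ?_
      exact pow_le_pow_right₀ hv (Finset.mem_range.1 hl).le
    have h2 : 1 ≤ |v| ^ (k + 1) := one_le_pow₀ hv
    simp only [Finset.sum_const, Finset.card_range, nsmul_eq_mul] at h1
    push_cast at h1
    nlinarith

open scoped FourierTransform SchwartzMap LineDeriv

lemma fourier_moment {n : ℕ} (φ : 𝓢(En n, ℂ)) (ξ : En n) (hξ : ‖ξ‖ = 1) (l : ℕ)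
    (h : ∀ l' ≤ l, ∀ x : En n, ⟪x, ξ⟫ = 0 → ∫ t : ℝ, ((t : ℝ) : ℂ) ^ l' * φ (x + t • ξ) = 0)
    (y : En n) (hy : ⟪y, ξ⟫ = 0) :
    Integrable (fun z : En n => ((⟪z, ξ⟫ : ℝ) : ℂ) ^ l *
      (Complex.exp (((-2 * Real.pi * ⟪z, y⟫ : ℝ) : ℂ) * Complex.I) * φ z)) ∧
    ∫ z : En n, ((⟪z, ξ⟫ : ℝ) : ℂ) ^ l *
      (Complex.exp (((-2 * Real.pi * ⟪z, y⟫ : ℝ) : ℂ) * Complex.I) * φ z) = 0 := by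
  have hφ := φ.continuous
  have hcont : Continuous (fun z : En n => ((⟪z, ξ⟫ : ℝ) : ℂ) ^ l *
      (Complex.exp (((-2 * Real.pi * ⟪z, y⟫ : ℝ) : ℂ) * Complex.I) * φ z)) := by fun_prop
  have hint : Integrable (fun z : En n => ((⟪z, ξ⟫ : ℝ) : ℂ) ^ l *
      (Complex.exp (((-2 * Real.pi * ⟪z, y⟫ : ℝ) : ℂ) * Complex.I) * φ z)) := by
    refine (φ.integrable_pow_mul volume l).mono' hcont.aestronglyMeasurable (ae_of_all _ fun z => ?_)
    rw [norm_mul, norm_mul, Complex.norm_exp_ofReal_mul_I, one_mul, norm_pow, Complex.norm_real]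
    gcongr
    have := norm_inner_le_norm (𝕜 := ℝ) z ξ
    rwa [hξ, mul_one] at this
  refine ⟨hint, integral_eq_zero_of_lines ξ hξ _ hcont hint fun z => ?_⟩
  -- shift to the foot point
  set c : ℝ := ⟪z, ξ⟫ with hc
  have hx : ⟪z - c • ξ, ξ⟫ = 0 := by
    rw [inner_sub_left, inner_smul_left]; simp [hξ, hc]
  have e : ∀ t : ℝ, ((⟪z + t • ξ, ξ⟫ : ℝ) : ℂ) ^ l *
      (Complex.exp (((-2 * Real.pi * ⟪z + t • ξ, y⟫ : ℝ) : ℂ) * Complex.I) * φ (z + t • ξ))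
      = Complex.exp (((-2 * Real.pi * ⟪z, y⟫ : ℝ) : ℂ) * Complex.I) *
        (fun t : ℝ => ((t : ℝ) : ℂ) ^ l * φ ((z - c • ξ) + t • ξ)) (t + c) := by
    intro t
    have h1 : ⟪z + t • ξ, ξ⟫ = t + c := by
      rw [inner_add_left, inner_smul_left]; simp [hξ, hc]; ring
    have h2 : ⟪z + t • ξ, y⟫ = ⟪z, y⟫ := by
      rw [inner_add_left, inner_smul_left, real_inner_comm, real_inner_comm y ξ, hy]
      simp
    have h3 : (z - c • ξ) + (t + c) • ξ = z + t • ξ := by module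
    simp only [h1, h2, h3]
    ring
  simp only [e]
  rw [integral_const_mul, integral_add_right_eq_self
    (fun t : ℝ => ((t : ℝ) : ℂ) ^ l * φ ((z - c • ξ) + t • ξ)) c, h l le_rfl _ hx, mul_zero]

lemma fourier_small {n : ℕ} (φ : 𝓢(En n, ℂ)) (ξ : En n) (hξ : ‖ξ‖ = 1) (k : ℕ)
    (h : ∀ l ≤ k, ∀ x : En n, ⟪x, ξ⟫ = 0 → ∫ t : ℝ, ((t : ℝ) : ℂ) ^ l * φ (x + t • ξ) = 0)
    (y : En n) (hy : ⟪y, ξ⟫ = 0) :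
    ∃ C : ℝ, ∀ u : ℝ, ‖𝓕 φ (y + u • ξ)‖ ≤ C * |u| ^ (k + 1) := by
  refine ⟨((k + 5) * (2 * Real.pi) ^ (k + 1)) * ∫ z, ‖z‖ ^ (k + 1) * ‖φ z‖, fun u => ?_⟩
  let E : En n → ℂ := fun z => Complex.exp (((-2 * Real.pi * ⟪z, y⟫ : ℝ) : ℂ) * Complex.I)
  let v : En n → ℝ := fun z => -2 * Real.pi * u * ⟪z, ξ⟫
  have hm : ∀ l ≤ k, Integrable (fun z : En n => ((⟪z, ξ⟫ : ℝ) : ℂ) ^ l * (E z * φ z)) ∧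
    ∫ z : En n, ((⟪z, ξ⟫ : ℝ) : ℂ) ^ l * (E z * φ z) = 0 := fun l hl =>
    fourier_moment φ ξ hξ l (fun l' hl' => h l' (hl'.trans hl)) y hy
  have hterm : ∀ l z, ((v z : ℂ) * Complex.I) ^ l / (l.factorial : ℂ) * (E z * φ z) =
      (((-2 * Real.pi * u : ℝ) : ℂ) * Complex.I) ^ l / (l.factorial : ℂ) *
        (((⟪z, ξ⟫ : ℝ) : ℂ) ^ l * (E z * φ z)) := by
    intro l z
    simp only [v]
    push_cast
    ring
  have hTi : ∀ l ∈ Finset.range (k + 1), Integrable (fun z => 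
      ((v z : ℂ) * Complex.I) ^ l / (l.factorial : ℂ) * (E z * φ z)) := by
    intro l hl
    simp only [hterm]
    exact (hm l (Nat.lt_succ_iff.1 (Finset.mem_range.1 hl))).1.const_mul _
  have hT0 : ∫ z, ∑ l ∈ Finset.range (k + 1),
      ((v z : ℂ) * Complex.I) ^ l / (l.factorial : ℂ) * (E z * φ z) = 0 := by
    rw [integral_finsetSum _ hTi]
    refine Finset.sum_eq_zero fun l hl => ?_
    simp only [hterm]
    rw [integral_const_mul, (hm l (Nat.lt_succ_iff.1 (Finset.mem_range.1 hl))).2, mul_zero]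
  have hφ := φ.continuous
  have hF : 𝓕 φ (y + u • ξ) = ∫ z, Complex.exp (v z * Complex.I) * (E z * φ z) := by
    rw [SchwartzMap.fourier_coe, Real.fourier_eq']
    congr 1
    funext z
    rw [smul_eq_mul, ← mul_assoc, ← Complex.exp_add]
    congr 2
    simp only [v, inner_add_right, inner_smul_right]
    push_cast
    ring
  have hFi : Integrable (fun z => Complex.exp (v z * Complex.I) * (E z * φ z)) := by
    refine (φ.integrable (μ := volume)).norm.mono' (Continuous.aestronglyMeasurable (by fun_prop)) (ae_of_all _ fun z => ?_)
    simp only [E]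
    rw [norm_mul, norm_mul, Complex.norm_exp_ofReal_mul_I, Complex.norm_exp_ofReal_mul_I]
    simp
  have hF2 : 𝓕 φ (y + u • ξ) = ∫ z, (Complex.exp (v z * Complex.I) -
      ∑ l ∈ Finset.range (k + 1), ((v z : ℂ) * Complex.I) ^ l / (l.factorial : ℂ)) * (E z * φ z) := by
    rw [hF, ← sub_zero (∫ z, Complex.exp (v z * Complex.I) * (E z * φ z)), ← hT0,
      ← integral_sub hFi (integrable_finsetSum _ hTi)]
    congr 1
    funext z
    rw [sub_mul, Finset.sum_mul]
  rw [hF2]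
  refine (norm_integral_le_of_norm_le (((φ.integrable_pow_mul volume (k+1)).const_mul
    ((k + 5) * (2 * Real.pi) ^ (k + 1) * |u| ^ (k + 1)))) (ae_of_all _ fun z => ?_)).trans ?_
  · rw [norm_mul, norm_mul]
    simp only [E]
    rw [Complex.norm_exp_ofReal_mul_I, one_mul, ← mul_assoc]
    refine mul_le_mul_of_nonneg_right ((exp_remainder k (v z)).trans ?_) (norm_nonneg _)
    have hb : |v z| ≤ 2 * Real.pi * |u| * ‖z‖ := by
      simp only [v]
      rw [abs_mul, abs_mul, abs_mul, abs_neg, abs_two, abs_of_pos Real.pi_pos]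
      gcongr
      have := norm_inner_le_norm (𝕜 := ℝ) z ξ
      rwa [hξ, mul_one] at this
    calc ((k:ℝ) + 5) * |v z| ^ (k + 1) ≤ (k + 5) * (2 * Real.pi * |u| * ‖z‖) ^ (k + 1) := by gcongr
      _ = _ := by ring
  · rw [integral_const_mul]
    apply le_of_eq
    ring
lemma ctrpow_smul {n : ℕ} (y : En n) (c : ℂ) (k : ℕ) : ∀ {p : ℕ} (F : (Fin (p + k) → Fin n) → ℂ)
    (i : Fin p → Fin n), ctrpow y k (fun i => c * F i) i = c * ctrpow y k F i := by
  induction k with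
  | zero => intro p F i; rfl
  | succ k ih =>
    intro p F i
    simp only [ctrpow]
    rw [← ih]
    congr 1
    funext i
    simp only [ctr, Finset.mul_sum]
    exact Finset.sum_congr rfl fun j _ => by ring

lemma fourier_lineDeriv_apply {n : ℕ} (g : 𝓢(En n, ℂ)) (v y : En n) :
    𝓕 (∂_{v} g) y = (2 * Real.pi * Complex.I) * ((⟪y, v⟫ : ℝ) * 𝓕 g y) := by
  rw [SchwartzMap.fourier_lineDerivOp_eq]
  rw [SchwartzMap.smul_apply, SchwartzMap.smulLeftCLM_apply_apply (by fun_prop)]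
  simp

lemma exists_divpow {n : ℕ} (k : ℕ) : ∀ {p : ℕ} (f : (Fin (p + k) → Fin n) → En n → ℝ)
    (g : (Fin (p + k) → Fin n) → 𝓢(En n, ℂ)) (_ : ∀ i x, g i x = (f i x : ℂ)),
    ∃ G : (Fin p → Fin n) → 𝓢(En n, ℂ), (∀ i x, G i x = (divpow k f i x : ℂ)) ∧
      ∀ i y, 𝓕 (G i) y = (2 * Real.pi * Complex.I) ^ k * ctrpow y k (fun i => 𝓕 (g i) y) i := by
  induction k with
  | zero =>
    intro p f g h
    exact ⟨g, h, fun i y => by simp [ctrpow]⟩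
  | succ k ih =>
    intro p f g h
    let g' : (Fin (p + k) → Fin n) → 𝓢(En n, ℂ) := fun i =>
      ∑ j : Fin n, ∂_{(EuclideanSpace.single j (1:ℝ) : En n)}
        (g (Fin.snoc (α := fun _ => Fin n) (n := p + k) i j))
    have hder : ∀ i x v, fderiv ℝ (g i) x v = ((fderiv ℝ (f i) x v : ℝ) : ℂ) := by
      intro i x v
      have hd : HasFDerivAt (g i) (fderiv ℝ (g i) x) x := (g i).differentiableAt.hasFDerivAt
      have hf : HasFDerivAt (f i) (Complex.reCLM.comp (fderiv ℝ (g i) x)) x := by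
        have e : f i = fun x => Complex.reCLM (g i x) := by funext x; simp [h]
        rw [e]
        exact Complex.reCLM.hasFDerivAt.comp x hd
      have hg : HasFDerivAt (g i) (Complex.ofRealCLM.comp (fderiv ℝ (f i) x)) x := by
        have e : (g i : En n → ℂ) = fun x => Complex.ofRealCLM (f i x) := by funext x; simp [h]
        rw [e]
        exact Complex.ofRealCLM.hasFDerivAt.comp x hf.differentiableAt.hasFDerivAt
      rw [hg.fderiv]
      rfl
    obtain ⟨G, hG, hG'⟩ := ih (divg (m := p + k) f) g' (by
      intro i x
      simp only [g', divg, pd, SchwartzMap.sum_apply, SchwartzMap.lineDerivOp_apply_eq_fderiv, hder]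
      push_cast
      rfl)
    refine ⟨G, hG, fun i y => ?_⟩
    rw [hG']
    have e : (fun i => 𝓕 (g' i) y) = fun i => (2 * Real.pi * Complex.I) *
        ctr (m := p + k) y (fun i => 𝓕 (g i) y) i := by
      funext i
      have : 𝓕 (g' i) = ∑ j : Fin n, 𝓕 (∂_{(EuclideanSpace.single j (1:ℝ) : En n)}
        (g (Fin.snoc (α := fun _ => Fin n) (n := p + k) i j))) :=
        map_sum (FourierTransform.fourierCLM ℂ 𝓢(En n, ℂ)) _ _
      rw [this, SchwartzMap.sum_apply]
      simp only [fourier_lineDeriv_apply, ctr, Finset.mul_sum]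
      refine Finset.sum_congr rfl fun j _ => ?_
      simp [EuclideanSpace.inner_single_right]
    rw [e, ctrpow_smul, pow_succ, ← mul_assoc]
    rfl

lemma tform_smul {n m : ℕ} (F : (Fin m → Fin n) → ℂ) (c : ℝ) (ξ : En n) :
    tform F (fun _ => c • ξ) = (c : ℂ) ^ m * tform F (fun _ => ξ) := by
  unfold tform
  rw [Finset.mul_sum]
  refine Finset.sum_congr rfl fun i _ => ?_
  have : ∀ r, (((c • ξ) (i r) : ℝ) : ℂ) = (c : ℂ) * (ξ (i r) : ℂ) := by intro r; simp
  simp_rw [this, Finset.prod_mul_distrib]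
  simp
  ring

lemma tform_zero_of {n m : ℕ} (F : (Fin m → Fin n) → ℂ) (v : Fin m → En n) (r : Fin m)
    (h : v r = 0) : tform F v = 0 := by
  unfold tform
  refine Finset.sum_eq_zero fun i _ => ?_
  rw [Finset.prod_eq_zero (Finset.mem_univ r) (by simp [h]), mul_zero]

lemma acoef_zero_right {n m : ℕ} (F : (Fin m → Fin n) → ℂ) (j : ℕ) (hj : j < m) (y : En n) :
    acoef F j y 0 = 0 := by
  classical
  unfold acoef
  refine Finset.sum_eq_zero fun S _ => ?_
  split_ifs with hS
  · obtain ⟨r, hr⟩ : ∃ r, r ∉ S := by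
      by_contra! hcon
      have : S = Finset.univ := Finset.eq_univ_iff_forall.2 hcon
      rw [this] at hS
      simp at hS
      omega
    exact tform_zero_of F _ r (if_neg hr)
  · rfl

lemma continuous_acoef {n m : ℕ} (F : En n → (Fin m → Fin n) → ℂ)
    (hF : ∀ i, Continuous (fun y => F y i)) (j : ℕ) :
    Continuous (fun q : En n × En n => acoef (F q.1) j q.1 q.2) := by
  classical
  unfold acoef tform
  refine continuous_finsetSum _ fun S _ => ?_
  split_ifs with hS
  · refine continuous_finsetSum _ fun i _ => ?_
    refine ((hF i).comp continuous_fst).mul (continuous_finsetProd _ fun r _ => ?_)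
    by_cases hr : r ∈ S
    · simp only [hr, if_true]; fun_prop
    · simp only [hr, if_false]; fun_prop
  · exact continuous_const

lemma continuous_acoef' {n m : ℕ} (F : En n → (Fin m → Fin n) → ℂ)
    (hF : ∀ i, Continuous (fun y => F y i)) (j : ℕ) (Y W : ℝ → En n) (hY : Continuous Y)
    (hW : Continuous W) : Continuous (fun u => acoef (F (Y u)) j (Y u) (W u)) :=
  Continuous.comp (g := fun q : En n × En n => acoef (F q.1) j q.1 q.2)
    (f := fun u => (Y u, W u)) (continuous_acoef F hF j) (hY.prodMk hW)

set_option maxHeartbeats 1000000 in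
lemma core {n p k : ℕ} (F : En n → (Fin (p + (k + 1)) → Fin n) → ℂ)
    (hF : ∀ i, Continuous (fun y => F y i))
    (hs : ∀ y (π : Equiv.Perm (Fin (p + (k + 1)))) i, F y (i ∘ π) = F y i)
    (hsol : ∀ y i, ctrpow y (k + 1) (F y) i = 0)
    (hsm : ∀ y ξ : En n, ⟪y, ξ⟫ = 0 → ∃ C : ℝ, ∀ u : ℝ,
      ‖tform (F (y + u • ξ)) (fun _ => ξ)‖ ≤ C * |u| ^ (k + 1)) :
    ∀ y, y ≠ 0 → ∀ i, F y i = 0 := by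
  have main : ∀ j, j ≤ k → ∀ y ξ : En n, y ≠ 0 → ⟪y, ξ⟫ = 0 → acoef (F y) j y ξ = 0 := by
    intro j
    induction j using Nat.strong_induction_on with
    | _ j ih =>
    intro hj y ξ hy hyξ
    by_cases hξ : ξ = 0
    · rw [hξ]; exact acoef_zero_right _ _ (by omega) _
    have hxp : 0 < ‖ξ‖ ^ 2 := by positivity
    have hyp : 0 < ‖y‖ ^ 2 := by positivity
    obtain ⟨C, hC⟩ := hsm y ξ hyξ
    let N : ℝ → ℝ := fun u => ‖y‖ ^ 2 + u ^ 2 * ‖ξ‖ ^ 2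
    have hN : ∀ u, 0 < N u := fun u => by positivity
    let s : ℝ → ℝ := fun u => u * ‖ξ‖ ^ 2 / N u
    let Y : ℝ → En n := fun u => y + u • ξ
    let W : ℝ → En n := fun u => ξ - s u • Y u
    have hNc : Continuous N := by fun_prop
    have hsc : Continuous s := by
      refine Continuous.div (by fun_prop) hNc fun u => (hN u).ne'
    have hYc : Continuous Y := by fun_prop
    have hWc : Continuous W := by fun_prop
    have hYY : ∀ u, ⟪Y u, Y u⟫ = N u := by
      intro u
      simp only [Y, N, inner_add_left, inner_add_right, inner_smul_left, inner_smul_right, hyξ,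
        real_inner_comm y ξ, real_inner_self_eq_norm_sq]
      simp
      ring
    have hYne : ∀ u, Y u ≠ 0 := by
      intro u h0
      have := hYY u
      rw [h0, inner_zero_left] at this
      exact (hN u).ne this
    have hYW : ∀ u, ⟪Y u, W u⟫ = 0 := by
      intro u
      simp only [W, inner_sub_right, inner_smul_right, hYY]
      simp only [s, Y, inner_add_left, inner_smul_left, hyξ, real_inner_self_eq_norm_sq]
      have := (hN u).ne'
      field_simp
      simp
      ring
    let Q : ℝ → ℂ := fun u => ∑ i ∈ Finset.range (k + 1),
      if j ≤ i then ((s u : ℝ) : ℂ) ^ (i - j) * acoef (F (Y u)) i (Y u) (W u) else 0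
    have hQc : Continuous Q := by
      refine continuous_finsetSum _ fun i _ => ?_
      split_ifs
      · refine Continuous.mul (by fun_prop) ?_
        exact continuous_acoef' F hF i Y W hYc hWc
      · exact continuous_const
    have hs0 : s 0 = 0 := by simp [s]
    have hQ0 : Q 0 = acoef (F y) j y ξ := by
      simp only [Q, W, Y, hs0]
      rw [Finset.sum_eq_single_of_mem j (Finset.mem_range.2 (by omega))]
      · simp
      · intro i _ hij
        split_ifs with h
        · have : i - j ≠ 0 := by omega
          simp [this]
        · rfl
    have hQP : ∀ u, tform (F (Y u)) (fun _ => ξ) = ((s u : ℝ) : ℂ) ^ j * Q u := by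
      intro u
      have e : ξ = W u + s u • Y u := by simp [W]
      conv_lhs => rw [e]
      rw [tform_expand' (F (Y u)) (Y u) (W u) (s u) (hs _) (hsol _)]
      simp only [Q, Finset.mul_sum]
      refine Finset.sum_congr rfl fun i hi => ?_
      split_ifs with h
      · rw [← mul_assoc, ← pow_add]
        congr 2
        omega
      · rw [ih i (by omega) (by omega) _ _ (hYne u) (hYW u)]
        simp
    have hbound : ∀ u, u ≠ 0 → ‖Q u‖ ≤ C * |u| ^ (k + 1 - j) * (N u / ‖ξ‖ ^ 2) ^ j := by
      intro u hu
      have h1 := hC u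
      have h2 : tform (F (y + u • ξ)) (fun _ => ξ) = ((s u : ℝ) : ℂ) ^ j * Q u := hQP u
      rw [h2, norm_mul, norm_pow, Complex.norm_real, Real.norm_eq_abs] at h1
      have h3 : |s u| = |u| * ‖ξ‖ ^ 2 / N u := by
        simp only [s]
        rw [abs_div, abs_mul, abs_of_pos hxp, abs_of_pos (hN u)]
      have hup : 0 < |u| := abs_pos.2 hu
      have hsp : 0 < |s u| := by rw [h3]; have := hN u; positivity
      have h4 : |u| ^ (k + 1) = |u| ^ (k + 1 - j) * |u| ^ j := by
        rw [← pow_add]; congr 1; omega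
      have h5 : |u| = |s u| * (N u / ‖ξ‖ ^ 2) := by
        rw [h3]; have := (hN u).ne'; field_simp
      have h6 : |u| ^ j = |s u| ^ j * (N u / ‖ξ‖ ^ 2) ^ j := by rw [← mul_pow, ← h5]
      rw [h4, h6] at h1
      have hspj : 0 < |s u| ^ j := by positivity
      refine le_of_mul_le_mul_left (h1.trans (le_of_eq ?_)) hspj
      ring
    have hlim : Tendsto (fun u : ℝ => C * |u| ^ (k + 1 - j) * (N u / ‖ξ‖ ^ 2) ^ j) (nhdsWithin 0 {0}ᶜ)
        (nhds 0) := by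
      have hcc : Continuous (fun u : ℝ => C * |u| ^ (k + 1 - j) * (N u / ‖ξ‖ ^ 2) ^ j) := by fun_prop
      have := hcc.tendsto 0
      have hne : k + 1 - j ≠ 0 := by omega
      simp only [abs_zero, zero_pow hne, mul_zero, zero_mul] at this
      exact this.mono_left nhdsWithin_le_nhds
    have hQlim : Tendsto Q (nhdsWithin 0 {0}ᶜ) (nhds 0) := by
      refine squeeze_zero_norm' ?_ hlim
      filter_upwards [self_mem_nhdsWithin] with u hu using hbound u hu
    rw [← hQ0]
    exact tendsto_nhds_unique ((hQc.tendsto 0).mono_left nhdsWithin_le_nhds) hQlim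
  intro y hy
  refine polar_zero (F y) (hs y) fun ξ => ?_
  have hyp : ‖y‖ ^ 2 ≠ 0 := by positivity
  set s : ℝ := ⟪y, ξ⟫ / ‖y‖ ^ 2 with hsdef
  have e : ξ = (ξ - s • y) + s • y := by simp
  have ho : ⟪y, ξ - s • y⟫ = 0 := by
    rw [inner_sub_right, inner_smul_right, real_inner_self_eq_norm_sq, hsdef]
    field_simp
    simp
  rw [e, tform_expand' (F y) y (ξ - s • y) s (hs y) (hsol y)]
  refine Finset.sum_eq_zero fun j hj => ?_
  rw [main j (by simpa [Nat.lt_succ_iff] using hj) y _ hy ho, mul_zero]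

/-- injectivity of `𝓘^k = (I^0,…,I^k)` on `(k+1)`-solenoidal
Schwartz tensor fields.  The rank is `m = p + (k+1)` (so `0 ≤ k ≤ m − 1`). -/
theorem momRT_injectivity_on_solenoidal
    (n p k : ℕ) (hn : 2 ≤ n)
    (f : (Fin (p + (k + 1)) → Fin n) → En n → ℝ)
    (hf : IsSchwartzField f) (hfsym : IsSymField f)
    (hsol : ∀ i x, divpow (k + 1) (p := p) f i x = 0)
    (hI : ∀ ℓ, ℓ ≤ k → ∀ x ξ : En n, ‖ξ‖ = 1 → ⟪x, ξ⟫ = 0 → momRT ℓ f x ξ = 0) :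
    ∀ i x, f i x = 0 := by
  choose φ hφ using hf
  let g : (Fin (p + (k + 1)) → Fin n) → 𝓢(En n, ℂ) := fun i =>
    (φ i).postcompCLM Complex.ofRealCLM
  have hg : ∀ i x, g i x = (f i x : ℂ) := by
    intro i x
    simp [g, SchwartzMap.postcompCLM_apply, hφ]
  have hgsym : ∀ (π : Equiv.Perm (Fin (p + (k + 1)))) i, g (i ∘ π) = g i := by
    intro π i
    ext x
    rw [hg, hg, hfsym]
  let F : En n → (Fin (p + (k + 1)) → Fin n) → ℂ := fun y i => 𝓕 (g i) y
  have hFc : ∀ i, Continuous (fun y => F y i) := fun i => (𝓕 (g i)).continuous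
  have hunit : ∀ y ξ : En n, ‖ξ‖ = 1 → ⟪y, ξ⟫ = 0 → ∃ C : ℝ, ∀ u : ℝ,
      ‖tform (F (y + u • ξ)) (fun _ => ξ)‖ ≤ C * |u| ^ (k + 1) := by
    intro y ξ hξ hy
    let Φ : 𝓢(En n, ℂ) := ∑ i, (∏ r, ((ξ (i r) : ℝ) : ℂ)) • g i
    have hΦ : ∀ z, 𝓕 Φ z = tform (F z) (fun _ => ξ) := by
      intro z
      have : 𝓕 Φ = ∑ i, 𝓕 ((∏ r, ((ξ (i r) : ℝ) : ℂ)) • g i) :=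
        map_sum (FourierTransform.fourierCLM ℂ 𝓢(En n, ℂ)) _ _
      rw [this, SchwartzMap.sum_apply]
      refine Finset.sum_congr rfl fun i _ => ?_
      rw [FourierTransform.fourier_smul, SchwartzMap.smul_apply, smul_eq_mul, mul_comm]
    obtain ⟨C, hC⟩ := fourier_small Φ ξ hξ k (by
      intro l hl x hx
      have := hI l hl x ξ hξ hx
      unfold momRT at this
      have h2 := congrArg (fun r : ℝ => (r : ℂ)) this
      simp only [Complex.ofReal_zero] at h2
      rw [← h2, ← integral_complex_ofReal]
      congr 1
      funext t
      push_cast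
      congr 1
      simp only [Φ, SchwartzMap.sum_apply, SchwartzMap.smul_apply, smul_eq_mul, hg]
      exact Finset.sum_congr rfl fun i _ => by ring) y hy
    refine ⟨C, fun u => ?_⟩
    rw [← hΦ]
    exact hC u
  have hsm : ∀ y ξ : En n, ⟪y, ξ⟫ = 0 → ∃ C : ℝ, ∀ u : ℝ,
      ‖tform (F (y + u • ξ)) (fun _ => ξ)‖ ≤ C * |u| ^ (k + 1) := by
    intro y ξ hy
    by_cases hξ : ξ = 0
    · refine ⟨0, fun u => ?_⟩
      rw [tform_zero_of _ _ (Fin.last (p + k)) hξ]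
      simp
    · have hc : ‖ξ‖ ≠ 0 := norm_ne_zero_iff.2 hξ
      let η : En n := ‖ξ‖⁻¹ • ξ
      have hη : ‖η‖ = 1 := by simp [η, norm_smul, hc]
      have hξη : ξ = ‖ξ‖ • η := by simp [η, smul_smul, hc]
      obtain ⟨C, hC⟩ := hunit y η hη (by simp [η, inner_smul_right, hy])
      refine ⟨‖ξ‖ ^ (p + (k + 1)) * (C * ‖ξ‖ ^ (k + 1)), fun u => ?_⟩
      have h1 := hC (u * ‖ξ‖)
      have h2 : (u * ‖ξ‖) • η = u • ξ := by rw [mul_smul, ← hξη]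
      rw [h2, abs_mul, abs_norm] at h1
      have h3 : tform (F (y + u • ξ)) (fun _ => ξ) =
          (‖ξ‖ : ℂ) ^ (p + (k + 1)) * tform (F (y + u • ξ)) (fun _ => η) := by
        rw [← tform_smul, ← hξη]
      rw [h3, norm_mul, norm_pow, Complex.norm_real, norm_norm]
      calc _ ≤ ‖ξ‖ ^ (p + (k + 1)) * (C * (|u| * ‖ξ‖) ^ (k + 1)) := by gcongr
        _ = _ := by ring
  obtain ⟨G, hG, hG'⟩ := exists_divpow (k + 1) (p := p) f g hg
  have hGz : ∀ i, G i = 0 := by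
    intro i; ext x; rw [hG, hsol]; simp
  have hctr : ∀ y i, ctrpow y (k + 1) (F y) i = 0 := by
    intro y i
    have h1 := hG' i y
    have h0 : 𝓕 (0 : 𝓢(En n, ℂ)) = 0 := map_zero (FourierTransform.fourierCLM ℂ 𝓢(En n, ℂ))
    rw [hGz, h0, SchwartzMap.zero_apply] at h1
    refine (mul_eq_zero.1 h1.symm).resolve_left (pow_ne_zero _ ?_)
    exact Complex.two_pi_I_ne_zero
  have hF0 := core F hFc (fun y π i => by simp only [F, hgsym]) hctr hsm
  have : Nontrivial (En n) := by
    have : Nonempty (Fin n) := ⟨⟨0, by omega⟩⟩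
    infer_instance
  have hF1 : ∀ i, 𝓕 (g i) = 0 := by
    intro i
    have hd : Dense ({0}ᶜ : Set (En n)) := dense_compl_singleton 0
    have := Continuous.ext_on hd (hFc i) (continuous_const (y := (0:ℂ))) (fun y hy => hF0 y hy i)
    ext y
    exact congrFun this y
  intro i x
  have h1 : g i = 0 := by
    rw [← FourierTransform.fourierInv_fourier_eq (F := 𝓢(En n, ℂ)) (g i), hF1]
    exact map_zero (FourierTransform.fourierInvCLM ℂ 𝓢(En n, ℂ))
  have h2 := hg i x
  rw [h1, SchwartzMap.zero_apply] at h2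
  exact_mod_cast h2.symm
end
end

section
/- Let n ≥ 2 and 1 ≤ k ≤ min{m−1, n−1}. A symmetric m-tensor field f ∈ 𝒮(S^m) with Schwartz components satisfies 𝓘^k f = 0 (i.e. I^ℓ f = 0 for ℓ = 0,…,k) if and only if f = d^{k+1} v for some smooth symmetric (m−k−1)-tensor field v ∈ C^∞(S^{m−k−1}) such that d^ℓ v(x) → 0 as |x| → ∞ for every 0 ≤ ℓ ≤ k. -/
noncomputable section

open MeasureTheory Filter
open scoped RealInnerProductSpace BigOperators

section Helpers
open scoped SchwartzMap LineDeriv FourierTransform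


lemma sch_decay {E F : Type} [NormedAddCommGroup E] [NormedSpace ℝ E]
    [NormedAddCommGroup F] [NormedSpace ℝ F] (g : 𝓢(E, F)) (N : ℕ) :
    ∃ B, 0 ≤ B ∧ ∀ x, (1 + ‖x‖) ^ N * ‖g x‖ ≤ B := by
  refine ⟨2 ^ N * (Finset.Iic (N, 0)).sup (fun m => SchwartzMap.seminorm ℝ m.1 m.2) g,
    by positivity, fun x => ?_⟩
  have := SchwartzMap.one_add_le_sup_seminorm_apply (𝕜 := ℝ) (m := (N, 0)) (k := N) (n := 0)
    le_rfl le_rfl g x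
  simpa using this

section Anti
variable {E : Type} [NormedAddCommGroup E] [InnerProductSpace ℝ E]

lemma line_bd (ω : E) (hω : ‖ω‖ = 1) (x : E) (s : ℝ) :
    1 + s ^ 2 ≤ (1 + ‖x‖) ^ 2 * (1 + ‖x + s • ω‖) ^ 2 := by
  have h1 : |s| ≤ ‖x + s • ω‖ + ‖x‖ := by
    have : s • ω = (x + s • ω) - x := by abel
    calc |s| = ‖s • ω‖ := by rw [norm_smul, hω, mul_one, Real.norm_eq_abs]
      _ = ‖(x + s • ω) - x‖ := by rw [← this]
      _ ≤ _ := norm_sub_le _ _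
  have h2 : 1 + |s| ≤ (1 + ‖x‖) * (1 + ‖x + s • ω‖) := by
    nlinarith [norm_nonneg x, norm_nonneg (x + s • ω), mul_nonneg (norm_nonneg x) (norm_nonneg (x + s • ω))]
  rw [← mul_pow]
  calc 1 + s ^ 2 ≤ (1 + |s|) ^ 2 := by nlinarith [abs_nonneg s, sq_abs s]
    _ ≤ _ := by gcongr

lemma sch_line_bd {F : Type} [NormedAddCommGroup F] [NormedSpace ℝ F] (g : 𝓢(E, F)) :
    ∃ B, 0 ≤ B ∧ ∀ (ω : E), ‖ω‖ = 1 → ∀ (x : E) (s : ℝ),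
      ‖g (x + s • ω)‖ ≤ B * (1 + ‖x‖) ^ 2 * (1 + s ^ 2)⁻¹ := by
  obtain ⟨B, hB, h⟩ := sch_decay g 2
  refine ⟨B, hB, fun ω hω x s => ?_⟩
  have h1 := h (x + s • ω)
  have h2 := line_bd ω hω x s
  have h3 : 0 < 1 + s ^ 2 := by positivity
  rw [← div_eq_mul_inv, le_div_iff₀ h3]
  calc ‖g (x + s • ω)‖ * (1 + s ^ 2)
      ≤ ‖g (x + s • ω)‖ * ((1 + ‖x‖) ^ 2 * (1 + ‖x + s • ω‖) ^ 2) := by gcongr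
    _ = ((1 + ‖x + s • ω‖) ^ 2 * ‖g (x + s • ω)‖) * (1 + ‖x‖) ^ 2 := by ring
    _ ≤ _ := by gcongr

lemma sch_line_integrable {F : Type} [NormedAddCommGroup F] [NormedSpace ℝ F] (g : 𝓢(E, F))
    (ω : E) (hω : ‖ω‖ = 1) (x : E) : Integrable (fun s : ℝ => g (x + s • ω)) := by
  obtain ⟨B, hB, h⟩ := sch_line_bd g
  refine Integrable.mono' (integrable_inv_one_add_sq.const_mul (B * (1 + ‖x‖) ^ 2)) ?_
    (Eventually.of_forall fun s => h ω hω x s)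
  exact (g.continuous.comp (by fun_prop)).aestronglyMeasurable

def antid {F : Type} [NormedAddCommGroup F] [NormedSpace ℝ F] (S : Set ℝ) (g : 𝓢(E, F))
    (ω : E) (x : E) : F := ∫ s in S, g (x + s • ω)

lemma antid_hasFDerivAt {F : Type} [NormedAddCommGroup F] [NormedSpace ℝ F] [CompleteSpace F]
    (S : Set ℝ) (g : 𝓢(E, F)) (ω : E) (hω : ‖ω‖ = 1) (x : E) :
    HasFDerivAt (antid S g ω) (antid S (SchwartzMap.fderivCLM ℝ E F g) ω x) x := by
  obtain ⟨B, hB, h⟩ := sch_line_bd (SchwartzMap.fderivCLM ℝ E F g)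
  unfold antid
  refine hasFDerivAt_integral_of_dominated_of_fderiv_le (μ := volume.restrict S)
    (F := fun x (s : ℝ) => g (x + s • ω))
    (F' := fun x (s : ℝ) => SchwartzMap.fderivCLM ℝ E F g (x + s • ω))
    (bound := fun s => B * (2 + ‖x‖) ^ 2 * (1 + s ^ 2)⁻¹)
    (Metric.ball_mem_nhds x one_pos) ?_ ?_ ?_ ?_ ?_ ?_
  · exact Eventually.of_forall fun y => (g.continuous.comp (by fun_prop)).aestronglyMeasurable
  · exact (sch_line_integrable g ω hω x).restrict
  · exact ((SchwartzMap.fderivCLM ℝ E F g).continuous.comp (by fun_prop)).aestronglyMeasurable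
  · refine Eventually.of_forall fun s y hy => (h ω hω y s).trans ?_
    have : ‖y‖ ≤ 1 + ‖x‖ := by
      have h1 : ‖y - x‖ < 1 := by simpa [dist_eq_norm] using hy
      have h2 : ‖y‖ ≤ ‖y - x‖ + ‖x‖ := by simpa using norm_add_le (y - x) x
      linarith
    have h3 : 1 + ‖y‖ ≤ 2 + ‖x‖ := by linarith
    gcongr
  · exact (integrable_inv_one_add_sq.const_mul _).restrict
  · refine Eventually.of_forall fun s y hy => ?_
    have h1 : HasFDerivAt g (fderiv ℝ g (y + s • ω)) (y + s • ω) :=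
      g.differentiableAt.hasFDerivAt
    have h2 : HasFDerivAt (fun y : E => y + s • ω) (ContinuousLinearMap.id ℝ E) y :=
      (hasFDerivAt_id y).add_const _
    exact h1.comp y h2

lemma antid_univ {F : Type} [NormedAddCommGroup F] [NormedSpace ℝ F] [CompleteSpace F]
    (g : 𝓢(E, F)) (ω : E) (hω : ‖ω‖ = 1)
    (h0 : ∀ x, ∫ s : ℝ, g (x + s • ω) = 0) (x : E) :
    ∫ s : ℝ, (SchwartzMap.fderivCLM ℝ E F g) (x + s • ω) = 0 := by
  have h1 := antid_hasFDerivAt Set.univ g ω hω x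
  have h2 : antid Set.univ g ω = fun _ => 0 := by
    funext y; simp [antid, h0]
  rw [h2] at h1
  have := h1.unique (hasFDerivAt_const (0 : F) x)
  simpa [antid] using this

lemma antid_compl {F : Type} [NormedAddCommGroup F] [NormedSpace ℝ F] [CompleteSpace F]
    (g : 𝓢(E, F)) (ω : E) (hω : ‖ω‖ = 1)
    (h0 : ∀ x, ∫ s : ℝ, g (x + s • ω) = 0) (x : E) :
    antid (Set.Iic 0) g ω x = - antid (Set.Ioi 0) g ω x := by
  have := integral_add_compl (s := Set.Iic (0 : ℝ)) measurableSet_Iic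
    (sch_line_integrable g ω hω x)
  rw [h0 x, Set.compl_Iic] at this
  exact eq_neg_of_add_eq_zero_left this

lemma antid_bd_aux {F : Type} [NormedAddCommGroup F] [NormedSpace ℝ F]
    (S : Set ℝ) (hS : MeasurableSet S) (g : 𝓢(E, F)) (ω : E) (hω : ‖ω‖ = 1) (x : E)
    (hx : ∀ s ∈ S, 0 ≤ s * ⟪x, ω⟫) (N : ℕ) (B : ℝ)
    (hB : ∀ x, (1 + ‖x‖) ^ (N + 2) * ‖g x‖ ≤ B) :
    (1 + ‖x‖) ^ N * ‖antid S g ω x‖ ≤ Real.pi * B := by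
  have hB0 : 0 ≤ B := le_trans (by positivity) (hB 0)
  have key : ∀ s ∈ S, (1 + ‖x‖) ^ N * ‖g (x + s • ω)‖ ≤ B * (1 + s ^ 2)⁻¹ := by
    intro s hs
    have h1 : ‖x + s • ω‖ ^ 2 = ‖x‖ ^ 2 + 2 * (s * ⟪x, ω⟫) + s ^ 2 := by
      rw [norm_add_sq_real, inner_smul_right, norm_smul, hω]; simp
    have h2 := hx s hs
    have h3 : ‖x‖ ≤ ‖x + s • ω‖ := by
      apply le_of_sq_le_sq _ (norm_nonneg _)
      nlinarith [sq_nonneg s]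
    have h4 : 1 + s ^ 2 ≤ (1 + ‖x + s • ω‖) ^ 2 := by
      nlinarith [norm_nonneg (x + s • ω), sq_nonneg ‖x‖]
    have h5 : 0 < 1 + s ^ 2 := by positivity
    rw [← div_eq_mul_inv, le_div_iff₀ h5]
    calc (1 + ‖x‖) ^ N * ‖g (x + s • ω)‖ * (1 + s ^ 2)
        ≤ (1 + ‖x + s • ω‖) ^ N * ‖g (x + s • ω)‖ * (1 + ‖x + s • ω‖) ^ 2 := by gcongr
      _ = (1 + ‖x + s • ω‖) ^ (N + 2) * ‖g (x + s • ω)‖ := by ring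
      _ ≤ B := hB _
  have h6 : (1 + ‖x‖) ^ N * ‖antid S g ω x‖ = ‖∫ s in S, (1 + ‖x‖) ^ N • g (x + s • ω)‖ := by
    rw [integral_smul, norm_smul, Real.norm_of_nonneg (by positivity)]; rfl
  rw [h6]
  calc ‖∫ s in S, (1 + ‖x‖) ^ N • g (x + s • ω)‖ ≤ ∫ s in S, B * (1 + s ^ 2)⁻¹ := by
        apply norm_integral_le_of_norm_le ((integrable_inv_one_add_sq.const_mul B).restrict)
        refine (ae_restrict_iff' hS).2 (Eventually.of_forall fun s hs => ?_)
        rw [norm_smul, Real.norm_of_nonneg (by positivity)]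
        exact key s hs
    _ ≤ ∫ s, B * (1 + s ^ 2)⁻¹ := by
        apply setIntegral_le_integral (integrable_inv_one_add_sq.const_mul B)
        exact Eventually.of_forall fun s => by positivity
    _ = Real.pi * B := by
        rw [integral_const_mul, integral_univ_inv_one_add_sq, mul_comm]

lemma antid_bd {F : Type} [NormedAddCommGroup F] [NormedSpace ℝ F] [CompleteSpace F]
    (g : 𝓢(E, F)) (ω : E) (hω : ‖ω‖ = 1)
    (h0 : ∀ x, ∫ s : ℝ, g (x + s • ω) = 0) (N : ℕ) (B : ℝ)
    (hB : ∀ x, (1 + ‖x‖) ^ (N + 2) * ‖g x‖ ≤ B) (x : E) :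
    (1 + ‖x‖) ^ N * ‖antid (Set.Iic 0) g ω x‖ ≤ Real.pi * B := by
  rcases le_total ⟪x, ω⟫ 0 with h | h
  · exact antid_bd_aux _ measurableSet_Iic g ω hω x
      (fun s hs => mul_nonneg_of_nonpos_of_nonpos hs h) N B hB
  · rw [antid_compl g ω hω h0, norm_neg]
    exact antid_bd_aux _ measurableSet_Ioi g ω hω x
      (fun s hs => mul_nonneg (le_of_lt hs) h) N B hB

lemma antid_smooth (ω : E) (hω : ‖ω‖ = 1) (n : ℕ) :
    ∀ (F : Type) [NormedAddCommGroup F] [NormedSpace ℝ F] [CompleteSpace F]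
    (g : 𝓢(E, F)) (_ : ∀ x, ∫ s : ℝ, g (x + s • ω) = 0),
    ContDiff ℝ n (antid (Set.Iic 0) g ω) ∧
    ∀ k : ℕ, ∃ C, ∀ x, ‖x‖ ^ k * ‖iteratedFDeriv ℝ n (antid (Set.Iic 0) g ω) x‖ ≤ C := by
  induction n with
  | zero =>
    intro F _ _ _ g h0
    constructor
    · rw [Nat.cast_zero, contDiff_zero]
      exact continuous_iff_continuousAt.2 fun x =>
        (antid_hasFDerivAt _ g ω hω x).continuousAt
    · intro k
      obtain ⟨B, -, hB⟩ := sch_decay g (k + 2)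
      refine ⟨Real.pi * B, fun x => ?_⟩
      rw [norm_iteratedFDeriv_zero]
      refine le_trans ?_ (antid_bd g ω hω h0 k B hB x)
      gcongr
      linarith
  | succ n ih =>
    intro F _ _ _ g h0
    have hd : fderiv ℝ (antid (Set.Iic 0) g ω)
        = antid (Set.Iic 0) (SchwartzMap.fderivCLM ℝ E F g) ω := by
      funext x
      exact (antid_hasFDerivAt _ g ω hω x).fderiv
    obtain ⟨h1, h2⟩ := ih (E →L[ℝ] F) (SchwartzMap.fderivCLM ℝ E F g) (antid_univ g ω hω h0)
    constructor
    · rw [Nat.cast_succ, contDiff_succ_iff_fderiv]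
      refine ⟨fun x => (antid_hasFDerivAt _ g ω hω x).differentiableAt, by simp, ?_⟩
      rw [hd]; exact h1
    · intro k
      obtain ⟨C, hC⟩ := h2 k
      refine ⟨C, fun x => ?_⟩
      rw [← norm_iteratedFDeriv_fderiv, hd]
      exact hC x

def antidS {F : Type} [NormedAddCommGroup F] [NormedSpace ℝ F] [CompleteSpace F]
    (g : 𝓢(E, F)) (ω : E) (hω : ‖ω‖ = 1)
    (h0 : ∀ x, ∫ s : ℝ, g (x + s • ω) = 0) : 𝓢(E, F) where
  toFun := antid (Set.Iic 0) g ω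
  smooth' := by
    have := fun n : ℕ => (antid_smooth ω hω n F g h0).1
    exact contDiff_infty.2 this
  decay' k n := (antid_smooth ω hω n F g h0).2 k

lemma sch_line_hasDerivAt {F : Type} [NormedAddCommGroup F] [NormedSpace ℝ F] (g : 𝓢(E, F))
    (ω x : E) (s : ℝ) : HasDerivAt (fun s : ℝ => g (x + s • ω)) ((∂_{ω} g : 𝓢(E, F)) (x + s • ω)) s := by
  have h1 : HasFDerivAt g (fderiv ℝ g (x + s • ω)) (x + s • ω) :=
      g.differentiableAt.hasFDerivAt
  have h2 : HasDerivAt (fun s : ℝ => x + s • ω) ω s := by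
    simpa using ((hasDerivAt_id s).smul_const ω).const_add x
  rw [SchwartzMap.lineDerivOp_apply_eq_fderiv]
  exact h1.comp_hasDerivAt s h2

/-- antiderivative along a direction -/
lemma antidS_spec {F : Type} [NormedAddCommGroup F] [NormedSpace ℝ F] [CompleteSpace F]
    (g : 𝓢(E, F)) (ω : E) (hω : ‖ω‖ = 1)
    (h0 : ∀ x, ∫ s : ℝ, g (x + s • ω) = 0) : ∂_{ω} (antidS g ω hω h0) = g := by
  ext x
  rw [SchwartzMap.lineDerivOp_apply_eq_fderiv]
  have h1 : fderiv ℝ (antidS g ω hω h0) x = antid (Set.Iic 0) (SchwartzMap.fderivCLM ℝ E F g) ω x :=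
    (antid_hasFDerivAt _ g ω hω x).fderiv
  rw [h1, antid, ContinuousLinearMap.integral_apply
    (sch_line_integrable _ ω hω x).restrict]
  have h2 : Integrable (fun s : ℝ => (∂_{ω} g : 𝓢(E, F)) (x + s • ω)) :=
    sch_line_integrable _ ω hω x
  have h3 : Integrable (fun s : ℝ => g (x + s • ω)) := sch_line_integrable _ ω hω x
  have := integral_Iic_of_hasDerivAt_of_tendsto' (a := (0 : ℝ)) (m := (0 : F))
    (f := fun s : ℝ => g (x + s • ω))
    (f' := fun s : ℝ => (∂_{ω} g : 𝓢(E, F)) (x + s • ω))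
    (fun s _ => sch_line_hasDerivAt g ω x s) h2.integrableOn
    (tendsto_zero_of_hasDerivAt_of_integrableOn_Iic (a := 0)
      (fun s _ => sch_line_hasDerivAt g ω x s) h2.integrableOn h3.integrableOn)
  simpa [SchwartzMap.lineDerivOp_apply_eq_fderiv] using this

end Anti

section Moments
variable {E : Type} [NormedAddCommGroup E] [InnerProductSpace ℝ E]

lemma line_antilip (ω : E) (hω : ‖ω‖ = 1) (x : E) :
    AntilipschitzWith 1 (fun s : ℝ => x + s • ω) := by
  refine AntilipschitzWith.of_le_mul_dist fun s t => ?_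
  simp [dist_eq_norm, ← sub_smul, norm_smul, hω]

/-- restriction of a Schwartz function to a line -/
lemma exists_line (g : 𝓢(E, ℝ)) (ω : E) (hω : ‖ω‖ = 1) (x : E) :
    ∃ ψ : 𝓢(ℝ, ℝ), ∀ t, ψ t = g (x + t • ω) := by
  have hg : (fun s : ℝ => x + s • ω).HasTemperateGrowth := by fun_prop
  exact ⟨SchwartzMap.compCLMOfAntilipschitz ℝ hg (line_antilip ω hω x) g, fun t => by simp⟩

lemma sch_mom_integrable (ψ : 𝓢(ℝ, ℝ)) (l : ℕ) : Integrable (fun t : ℝ => t ^ l * ψ t) := by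
  have := ψ.integrable_pow_mul volume l
  refine this.mono ((by fun_prop : Continuous fun t : ℝ => t ^ l * ψ t).aestronglyMeasurable)
    (Eventually.of_forall fun t => ?_)
  simp

lemma mom_parts0 (ψ ψ' : 𝓢(ℝ, ℝ)) (h : ∀ t, HasDerivAt ψ (ψ' t) t) : ∫ t, ψ' t = 0 :=
  integral_eq_zero_of_hasDerivAt_of_integrable h ψ'.integrable ψ.integrable

lemma mom_parts (ψ ψ' : 𝓢(ℝ, ℝ)) (h : ∀ t, HasDerivAt ψ (ψ' t) t) (l : ℕ) :
    ∫ t, t ^ (l + 1) * ψ' t = - ((l + 1 : ℝ) * ∫ t, t ^ l * ψ t) := by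
  have h1 : ∀ t : ℝ, HasDerivAt (fun t => t ^ (l + 1) * ψ t)
      ((l + 1 : ℝ) * (t ^ l * ψ t) + t ^ (l + 1) * ψ' t) t := by
    intro t
    have := (hasDerivAt_pow (l + 1) t).fun_mul (h t)
    refine this.congr_deriv ?_
    push_cast
    ring
  have i1 := (sch_mom_integrable ψ l).const_mul (l + 1 : ℝ)
  have i2 := sch_mom_integrable ψ' (l + 1)
  have := integral_eq_zero_of_hasDerivAt_of_integrable h1 (i1.add i2)
    (sch_mom_integrable ψ (l + 1))
  rw [integral_add i1 i2, integral_const_mul] at this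
  linarith

lemma iter_antid (ω : E) (hω : ‖ω‖ = 1) (N : ℕ) (c : ℕ) : ∀ (g : 𝓢(E, ℝ)),
    (∀ l, l < c → ∀ x, ∫ t : ℝ, t ^ l * g (x + t • ω) = 0) → ∀ B : ℝ,
    (∀ x, (1 + ‖x‖) ^ (N + 2 * c) * ‖g x‖ ≤ B) →
    ∃ V : 𝓢(E, ℝ), (fun S : 𝓢(E, ℝ) => ∂_{ω} S)^[c] V = g ∧
      ∀ x, (1 + ‖x‖) ^ N * ‖V x‖ ≤ Real.pi ^ c * B := by
  induction c with
  | zero => intro g _ B hB; exact ⟨g, rfl, by simpa using hB⟩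
  | succ c ih =>
    intro g h0 B hB
    have h00 : ∀ x, ∫ t : ℝ, g (x + t • ω) = 0 := by simpa using h0 0 (by simp)
    have hG := antidS_spec g ω hω h00
    obtain ⟨V, h1, h2⟩ := ih (antidS g ω hω h00) (by
      intro l hl x
      obtain ⟨ψ, hψ⟩ := exists_line (antidS g ω hω h00) ω hω x
      obtain ⟨ψ', hψ'⟩ := exists_line g ω hω x
      have hd : ∀ t, HasDerivAt ψ (ψ' t) t := by
        intro t
        have := sch_line_hasDerivAt (antidS g ω hω h00) ω x t
        rw [hG, ← hψ'] at this
        have e : ⇑ψ = fun s : ℝ => (antidS g ω hω h00) (x + s • ω) := funext hψ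
        rw [e]; exact this
      have h3 := mom_parts ψ ψ' hd l
      have h4 := h0 (l + 1) (by omega) x
      simp_rw [← hψ'] at h4
      simp_rw [← hψ]
      rw [h4] at h3
      have h5 : (l + 1 : ℝ) ≠ 0 := by positivity
      have h6 : (l + 1 : ℝ) * ∫ t, t ^ l * ψ t = 0 := by linarith
      exact (mul_eq_zero.1 h6).resolve_left h5) (Real.pi * B) (fun x =>
        antid_bd g ω hω h00 (N + 2 * c) B hB x)
    refine ⟨V, ?_, fun x => (h2 x).trans (by rw [pow_succ, mul_assoc])⟩
    rw [Function.iterate_succ_apply', h1]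
    exact hG

/-- an antiderivative vanishing at infinity of a Schwartz function on the line is Schwartz -/
lemma schwartz_of_deriv (ψ : 𝓢(ℝ, ℝ)) (G : ℝ → ℝ) (h : ∀ t, HasDerivAt G (ψ t) t)
    (ht : Tendsto G atTop (nhds 0)) (hb : Tendsto G atBot (nhds 0)) :
    ∃ Ψ : 𝓢(ℝ, ℝ), ⇑Ψ = G := by
  have hint : ∫ t, ψ t = 0 := by
    simpa using integral_of_hasDerivAt_of_tendsto h ψ.integrable hb ht
  have h0 : ∀ x : ℝ, ∫ s : ℝ, ψ (x + s • (1 : ℝ)) = 0 := by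
    intro x
    simp only [smul_eq_mul, mul_one]
    rw [integral_add_left_eq_self (fun s => ψ s) x, hint]
  have hΨ := antidS_spec ψ 1 (by simp) h0
  set Ψ := antidS ψ 1 (by simp) h0
  have hd : ∀ t, HasDerivAt Ψ (ψ t) t := by
    intro t
    have := sch_line_hasDerivAt Ψ 1 0 t
    rw [hΨ] at this
    simpa using this
  have hc : ∀ t, HasDerivAt (fun t => G t - Ψ t) 0 t := fun t => by
    have := (h t).fun_sub (hd t)
    rw [sub_self] at this
    exact this
  have hconst : ∀ t, G t - Ψ t = G 0 - Ψ 0 := fun t =>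
    is_const_of_deriv_eq_zero (fun t => (hc t).differentiableAt) (fun t => (hc t).deriv) t 0
  have hlim : Tendsto (fun t => G t - Ψ t) atTop (nhds 0) := by
    have := Ψ.tendsto_cocompact
    have h2 : Tendsto Ψ atTop (nhds 0) := this.mono_left atTop_le_cocompact
    simpa using ht.sub h2
  have hz : G 0 - Ψ 0 = 0 := by
    simp_rw [hconst] at hlim
    exact tendsto_nhds_unique tendsto_const_nhds hlim
  refine ⟨Ψ, funext fun t => ?_⟩
  have := hconst t
  linarith

end Moments

section Tens

/-- evaluation of a tensor on `ξ ⊗ ⋯ ⊗ ξ` -/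
def tev {n p : ℕ} {A : Type*} [AddCommGroup A] [Module ℝ A] (T : (Fin p → Fin n) → A)
    (ξ : En n) : A := ∑ i, (∏ r, ξ (i r)) • T i

lemma tev_map {n p : ℕ} {A B : Type*} [AddCommGroup A] [Module ℝ A] [AddCommGroup B] [Module ℝ B]
    (L : A →ₗ[ℝ] B) (T : (Fin p → Fin n) → A) (ξ : En n) :
    L (tev T ξ) = tev (fun i => L (T i)) ξ := by
  simp [tev, map_sum]

lemma symz_map {n p : ℕ} {A B : Type*} [AddCommGroup A] [Module ℝ A] [AddCommGroup B] [Module ℝ B]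
    (L : A →ₗ[ℝ] B) (T : (Fin p → Fin n) → A) (i : Fin p → Fin n) :
    L (symz T i) = symz (fun i => L (T i)) i := by
  simp [symz, map_sum]

lemma symz_symm {n p : ℕ} {A : Type*} [AddCommGroup A] [Module ℝ A]
    (T : (Fin p → Fin n) → A) (π : Equiv.Perm (Fin p)) (i : Fin p → Fin n) :
    symz T (i ∘ π) = symz T i := by
  unfold symz
  congr 1
  exact Fintype.sum_equiv (Equiv.mulLeft π) _ _ (fun τ => rfl)

lemma symz_of_symm {n p : ℕ} {A : Type*} [AddCommGroup A] [Module ℝ A]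
    (T : (Fin p → Fin n) → A) (h : ∀ (π : Equiv.Perm (Fin p)) i, T (i ∘ π) = T i) :
    symz T = T := by
  funext i
  have : (p.factorial : ℝ) ≠ 0 := by positivity
  simp only [symz, h, Finset.sum_const, Finset.card_univ, Fintype.card_perm, Fintype.card_fin]
  rw [← Nat.cast_smul_eq_nsmul ℝ, smul_smul, inv_mul_cancel₀ this, one_smul]

lemma tev_symz {n p : ℕ} {A : Type*} [AddCommGroup A] [Module ℝ A]
    (T : (Fin p → Fin n) → A) (ξ : En n) : tev (symz T) ξ = tev T ξ := by
  have h1 : ∀ π : Equiv.Perm (Fin p), ∑ i : Fin p → Fin n, (∏ r, ξ (i r)) • T (i ∘ π)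
      = tev T ξ := by
    intro π
    refine Fintype.sum_equiv (Equiv.arrowCongr π.symm (Equiv.refl (Fin n))) _ _ (fun i => ?_)
    have h2 : (Equiv.arrowCongr π.symm (Equiv.refl (Fin n))) i = i ∘ π := by
      funext s; simp [Equiv.arrowCongr]
    rw [h2]
    congr 1
    exact (Equiv.prod_comp π (fun r => ξ (i r))).symm
  have hp : (p.factorial : ℝ) ≠ 0 := by positivity
  calc tev (symz T) ξ = ∑ i : Fin p → Fin n, (p.factorial : ℝ)⁻¹ •
        ∑ π : Equiv.Perm (Fin p), (∏ r, ξ (i r)) • T (i ∘ π) := by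
        unfold tev symz
        refine Finset.sum_congr rfl fun i _ => ?_
        rw [smul_comm, Finset.smul_sum]
    _ = (p.factorial : ℝ)⁻¹ • ∑ π : Equiv.Perm (Fin p), tev T ξ := by
        rw [← Finset.smul_sum, Finset.sum_comm]
        simp_rw [h1]
    _ = tev T ξ := by
        simp only [Finset.sum_const, Finset.card_univ, Fintype.card_perm, Fintype.card_fin]
        rw [← Nat.cast_smul_eq_nsmul ℝ, smul_smul, inv_mul_cancel₀ hp, one_smul]

/-- homogeneous polynomial maps -/
def IsHP {n : ℕ} {A : Type*} [AddCommGroup A] [Module ℝ A] (m : ℕ) (F : En n → A) : Prop :=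
  ∃ T : (Fin m → Fin n) → A, ∀ ξ, F ξ = tev T ξ

lemma IsHP.add {n m : ℕ} {A : Type*} [AddCommGroup A] [Module ℝ A] {F G : En n → A}
    (hF : IsHP m F) (hG : IsHP m G) : IsHP m (fun ξ => F ξ + G ξ) := by
  obtain ⟨T, hT⟩ := hF
  obtain ⟨U, hU⟩ := hG
  exact ⟨fun i => T i + U i, fun ξ => by simp [hT, hU, tev, Finset.sum_add_distrib]⟩

lemma IsHP.zero {n m : ℕ} {A : Type*} [AddCommGroup A] [Module ℝ A] :
    IsHP m (fun _ : En n => (0 : A)) := ⟨fun _ => 0, fun ξ => by simp [tev]⟩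

lemma IsHP.sum {n m : ℕ} {A : Type*} [AddCommGroup A] [Module ℝ A] {ι : Type*} (s : Finset ι)
    {F : ι → En n → A} (hF : ∀ i, IsHP m (F i)) : IsHP m (fun ξ => ∑ i ∈ s, F i ξ) := by
  classical
  induction s using Finset.induction_on with
  | empty => simpa using IsHP.zero
  | insert a s ha ih =>
    simp_rw [Finset.sum_insert ha]
    exact (hF a).add ih

lemma IsHP.map {n m : ℕ} {A B : Type*} [AddCommGroup A] [Module ℝ A] [AddCommGroup B] [Module ℝ B]
    {F : En n → A} (hF : IsHP m F) (L : A →ₗ[ℝ] B) : IsHP m (fun ξ => L (F ξ)) := by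
  obtain ⟨T, hT⟩ := hF
  exact ⟨fun i => L (T i), fun ξ => by simp only [hT, tev_map]⟩

lemma IsHP.const {n : ℕ} {A : Type*} [AddCommGroup A] [Module ℝ A] (a : A) :
    IsHP 0 (fun _ : En n => a) := ⟨fun _ => a, fun ξ => by simp [tev]⟩

lemma lin_eq {n : ℕ} (L : En n →ₗ[ℝ] ℝ) (ξ : En n) :
    L ξ = ∑ j, ξ j * L (EuclideanSpace.single j 1) := by
  have : ξ = ∑ j, ξ j • EuclideanSpace.single j (1 : ℝ) := by
    ext l
    simp [Finset.sum_apply, Pi.single_apply]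
  conv_lhs => rw [this]
  simp

lemma IsHP.lin_mul {n m : ℕ} {A : Type*} [AddCommGroup A] [Module ℝ A] {F : En n → A}
    (hF : IsHP m F) (L : En n →ₗ[ℝ] ℝ) : IsHP (m + 1) (fun ξ => L ξ • F ξ) := by
  obtain ⟨T, hT⟩ := hF
  refine ⟨fun i => L (EuclideanSpace.single (i 0) 1) • T (Fin.tail i), fun ξ => ?_⟩
  simp only [hT]
  rw [lin_eq]
  unfold tev
  rw [← (Fin.consEquiv (fun _ : Fin (m + 1) => Fin n)).sum_comp, Fintype.sum_prod_type,
    Finset.sum_smul]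
  refine Finset.sum_congr rfl fun j _ => ?_
  rw [Finset.smul_sum]
  refine Finset.sum_congr rfl fun i _ => ?_
  have hc : (Fin.consEquiv (fun _ : Fin (m + 1) => Fin n)) (j, i) = (Fin.cons j i : Fin (m + 1) → Fin n) := rfl
  rw [hc, Fin.prod_univ_succ]
  beta_reduce
  rw [Fin.tail_cons, smul_smul, smul_smul]
  simp only [Fin.cons_zero, Fin.cons_succ]
  congr 1
  ring

lemma IsHP.prod {n : ℕ} (m : ℕ) (L : Fin m → En n →ₗ[ℝ] ℝ) :
    IsHP m (fun ξ : En n => ∏ r, L r ξ) := by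
  induction m with
  | zero => simpa using IsHP.const (n := n) (1 : ℝ)
  | succ m ih =>
    simp_rw [Fin.prod_univ_succ]
    exact (ih (fun r => L r.succ)).lin_mul (L 0)

def coordL {n : ℕ} (j : Fin n) : En n →ₗ[ℝ] ℝ := (EuclideanSpace.proj j : En n →L[ℝ] ℝ).toLinearMap

def inL {n : ℕ} (y : En n) : En n →ₗ[ℝ] ℝ := (innerSL ℝ y).toLinearMap

lemma mono_div {n : ℕ} (y u : En n) (m : ℕ) : ∀ (i : Fin (m + 1) → Fin n),
    ∃ F : En n → ℝ, IsHP m F ∧ ∀ ξ : En n,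
      ∏ r, ξ (i r) - ∏ r, (ξ - ⟪y, ξ⟫ • u) (i r) = ⟪y, ξ⟫ * F ξ := by
  induction m with
  | zero =>
    intro i
    refine ⟨fun _ => u (i 0), IsHP.const _, fun ξ => ?_⟩
    simp
  | succ m ih =>
    intro i
    obtain ⟨F, hF, h⟩ := ih (fun r => i r.succ)
    refine ⟨fun ξ => coordL (i 0) ξ • F ξ +
      (LinearMap.lsmul ℝ ℝ (u (i 0))) (∏ r : Fin (m + 1), (coordL (i r.succ) - u (i r.succ) • inL y) ξ), 
      (hF.lin_mul _).add ((IsHP.prod _ _).map _), fun ξ => ?_⟩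
    have h1 := h ξ
    beta_reduce
    rw [Fin.prod_univ_succ, Fin.prod_univ_succ (fun r => (ξ - ⟪y, ξ⟫ • u) (i r))]
    have h2 : ∏ r : Fin (m + 1), (coordL (i r.succ) - u (i r.succ) • inL y) ξ
      = ∏ r : Fin (m + 1), (ξ - ⟪y, ξ⟫ • u) (i r.succ) := by
      refine Finset.prod_congr rfl fun r _ => ?_
      simp [coordL, inL, mul_comm]
    rw [h2]
    have h3 : (ξ - ⟪y, ξ⟫ • u) (i 0) = ξ (i 0) - ⟪y, ξ⟫ * u (i 0) := by simp
    have h4 : coordL (i 0) ξ = ξ (i 0) := rfl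
    rw [h3, h4]
    simp only [LinearMap.lsmul_apply, smul_eq_mul]
    linear_combination ξ (i 0) * h1

lemma tev_div {n m : ℕ} {A : Type*} [AddCommGroup A] [Module ℝ A] (y u : En n) (hu : ⟪y, u⟫ = 1)
    (T : (Fin (m + 1) → Fin n) → A) (h0 : ∀ ξ : En n, ⟪y, ξ⟫ = 0 → tev T ξ = 0) :
    ∃ G : (Fin m → Fin n) → A, ∀ ξ : En n, tev T ξ = ⟪y, ξ⟫ • tev G ξ := by
  choose F hF h using mono_div y u m
  have hp : IsHP m (fun ξ : En n => ∑ i : Fin (m + 1) → Fin n, F i ξ • T i) :=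
    IsHP.sum _ fun i => (hF i).map ((LinearMap.toSpanSingleton ℝ A (T i)))
  obtain ⟨G, hG⟩ := hp
  refine ⟨G, fun ξ => ?_⟩
  rw [← hG, Finset.smul_sum]
  have h1 : tev T (ξ - ⟪y, ξ⟫ • u) = 0 := by
    apply h0
    rw [inner_sub_right, inner_smul_right, hu]; ring
  rw [← sub_zero (tev T ξ), ← h1]
  unfold tev
  rw [← Finset.sum_sub_distrib]
  refine Finset.sum_congr rfl fun i _ => ?_
  rw [← sub_smul, h, mul_smul]

lemma dense_inner {n : ℕ} (y : En n) (hy : y ≠ 0) : Dense {η : En n | ⟪y, η⟫ ≠ 0} := by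
  have h0 : {η : En n | ⟪y, η⟫ ≠ 0} = ((LinearMap.ker (inL y) : Submodule ℝ (En n)) : Set (En n))ᶜ := by
    ext η; simp [inL]
  rw [h0, ← interior_eq_empty_iff_dense_compl]
  by_contra hne
  have h := Submodule.eq_top_of_nonempty_interior' (LinearMap.ker (inL y))
    (Set.nonempty_iff_ne_empty.2 hne)
  have h1 : y ∈ LinearMap.ker (inL y) := h ▸ Submodule.mem_top
  have h2 : ⟪y, y⟫ = 0 := h1
  exact hy (inner_self_eq_zero.1 h2)

lemma tev_continuous {n m : ℕ} {A : Type*} [NormedAddCommGroup A] [NormedSpace ℝ A]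
    (T : (Fin m → Fin n) → A) : Continuous (tev T) := by
  unfold tev
  fun_prop

lemma tev_div_pow {n p : ℕ} {A : Type*} [NormedAddCommGroup A] [NormedSpace ℝ A] (y : En n)
    (hy : y ≠ 0) (C : ℝ) (c : ℕ) : ∀ (T : (Fin (p + c) → Fin n) → A)
    (_ : ∀ η : En n, ‖tev T η‖ ≤ C * |⟪y, η⟫| ^ c * ‖η‖ ^ p),
    ∃ G : (Fin p → Fin n) → A, ∀ ξ : En n, tev T ξ = ⟪y, ξ⟫ ^ c • tev G ξ := by
  induction c with
  | zero => intro T _; exact ⟨T, fun ξ => by simp⟩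
  | succ c ih =>
    intro T hT
    have hyy : ⟪y, y⟫ ≠ 0 := fun h => hy (inner_self_eq_zero.1 h)
    obtain ⟨G, hG⟩ := tev_div y (⟪y, y⟫⁻¹ • y) (by rw [inner_smul_right]; exact inv_mul_cancel₀ hyy)
      (m := p + c) T (fun ξ hξ => by
        have := hT ξ
        rw [hξ] at this
        simpa using this)
    obtain ⟨H, hH⟩ := ih G (by
      have hcl : IsClosed {η : En n | ‖tev G η‖ ≤ C * |⟪y, η⟫| ^ c * ‖η‖ ^ p} := by
        refine isClosed_le (tev_continuous G).norm ?_
        fun_prop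
      have hsub : {η : En n | ⟪y, η⟫ ≠ 0} ⊆ {η : En n | ‖tev G η‖ ≤ C * |⟪y, η⟫| ^ c * ‖η‖ ^ p} := by
        intro η hη
        have h1 := hT η
        have h2 : 0 < |⟪y, η⟫| := abs_pos.2 hη
        have h3 : ‖tev T η‖ = |⟪y, η⟫| * ‖tev G η‖ := by
          have h5 := congrArg norm (hG η)
          rw [norm_smul, Real.norm_eq_abs] at h5
          exact h5
        rw [h3] at h1
        have h4 : |⟪y, η⟫| * ‖tev G η‖ ≤ |⟪y, η⟫| * (C * |⟪y, η⟫| ^ c * ‖η‖ ^ p) := by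
          calc _ ≤ _ := h1
            _ = _ := by ring
        exact le_of_mul_le_mul_left h4 h2
      intro η
      have := hcl.closure_subset_iff.2 hsub
      rw [(dense_inner y hy).closure_eq] at this
      exact this (Set.mem_univ η))
    exact ⟨H, fun ξ => by
      have h5 := hG ξ
      rw [hH, smul_smul] at h5
      rw [pow_succ, mul_comm]; exact h5⟩

end Tens

section Polar

/-- permanent-type polarization identity -/
lemma polar_scalar (p : ℕ) (a : Fin p → ℝ) (b : Fin p → Fin p → ℝ) :
    ∑ S ∈ (Finset.univ : Finset (Fin p)).powerset, (∏ _s ∈ Finset.univ \ S, (-1 : ℝ)) *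
      ∏ r, (a r + ∑ s ∈ S, b r s) = ∑ π : Equiv.Perm (Fin p), ∏ r, b r (π r) := by
  classical
  set c : Fin p → Option (Fin p) → ℝ := fun r o => o.elim (a r) (b r) with hc
  have h1 : ∀ S : Finset (Fin p), ∏ r, (a r + ∑ s ∈ S, b r s)
      = ∑ σ : Fin p → Option (Fin p), ∏ r, (c r (σ r) *
        (if ∀ s, σ r = some s → s ∈ S then 1 else 0)) := by
    intro S
    rw [← Fintype.prod_sum (fun r o => c r o * if ∀ s, o = some s → s ∈ S then 1 else 0)]
    refine Finset.prod_congr rfl fun r _ => ?_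
    rw [Fintype.sum_option]
    simp [hc, Finset.sum_ite_mem]
  have h2 : ∀ (S : Finset (Fin p)) (σ : Fin p → Option (Fin p)),
      (∏ _s ∈ Finset.univ \ S, (-1 : ℝ)) * ∏ r, (c r (σ r) *
        (if ∀ s, σ r = some s → s ∈ S then (1 : ℝ) else 0)) =
      (∏ r, c r (σ r)) * ((∏ _s ∈ S, (1 : ℝ)) *
        ∏ s ∈ Finset.univ \ S, (if ∃ r, σ r = some s then (0 : ℝ) else -1)) := by
    intro S σ
    rw [Finset.prod_mul_distrib, Finset.prod_const_one, one_mul]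
    by_cases hS : ∀ r s, σ r = some s → s ∈ S
    · have e1 : ∏ r, (if ∀ s, σ r = some s → s ∈ S then (1 : ℝ) else 0) = 1 :=
        Finset.prod_eq_one fun r _ => if_pos (hS r)
      have e2 : ∏ s ∈ Finset.univ \ S, (if ∃ r, σ r = some s then (0 : ℝ) else -1)
          = ∏ _s ∈ Finset.univ \ S, (-1 : ℝ) := by
        refine Finset.prod_congr rfl fun s hs => if_neg ?_
        rintro ⟨r, hr⟩
        exact (Finset.mem_sdiff.1 hs).2 (hS r s hr)
      rw [e1, e2]; ring
    · push Not at hS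
      obtain ⟨r, s, hr, hs⟩ := hS
      have e1 : ∏ r, (if ∀ s, σ r = some s → s ∈ S then (1 : ℝ) else 0) = 0 :=
        Finset.prod_eq_zero (Finset.mem_univ r) (if_neg fun h => hs (h s hr))
      have e2 : ∏ s ∈ Finset.univ \ S, (if ∃ r, σ r = some s then (0 : ℝ) else -1) = 0 :=
        Finset.prod_eq_zero (i := s) (by simpa using hs) (if_pos ⟨r, hr⟩)
      rw [e1, e2]; ring
  simp_rw [h1, Finset.mul_sum, h2]
  rw [Finset.sum_comm]
  simp_rw [← Finset.mul_sum, ← Finset.prod_add]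
  symm
  refine Finset.sum_of_injOn (fun (π : Equiv.Perm (Fin p)) r => some (π r)) ?_ ?_ ?_ ?_
  · intro π _ τ _ h
    ext r
    have := congrFun h r
    simp only [Option.some.injEq] at this
    rw [this]
  · intro π _; simp
  · intro σ _ hσ
    have : ∃ s, ¬ ∃ r, σ r = some s := by
      by_contra! hcon
      choose g hg using hcon
      have hinj : Function.Injective g := by
        intro s t hst
        have h3 := hg s
        rw [hst, hg t] at h3
        exact (Option.some.inj h3).symm
      have hbij := Finite.injective_iff_bijective.1 hinj
      apply hσ
      refine ⟨(Equiv.ofBijective g hbij).symm, by simp, ?_⟩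
      funext r
      obtain ⟨s, rfl⟩ := hbij.2 r
      have : (Equiv.ofBijective g hbij).symm (g s) = s :=
        (Equiv.ofBijective g hbij).symm_apply_apply s
      simp only [this]
      exact (hg s).symm
    obtain ⟨s, hs⟩ := this
    have h5 : ∏ s, ((1 : ℝ) + if ∃ r, σ r = some s then 0 else -1) = 0 :=
      Finset.prod_eq_zero (Finset.mem_univ s) (by rw [if_neg hs]; norm_num)
    rw [h5, mul_zero]
  · intro π _
    have : ∏ s : Fin p, ((1 : ℝ) + if ∃ r, some (π r) = some s then 0 else -1) = 1 := by
      refine Finset.prod_eq_one fun s _ => ?_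
      rw [if_pos ⟨π.symm s, by simp⟩, add_zero]
    rw [this, mul_one]
    rfl

/-- the node used in the polarization formula -/
def node {n p : ℕ} (i : Fin p → Fin n) (S : Finset (Fin p)) : En n :=
  WithLp.toLp 2 (fun l => 1 + ∑ s ∈ S, if l = i s then (1 : ℝ) else 0)

lemma node_ne {n p : ℕ} (hn : 0 < n) (i : Fin p → Fin n) (S : Finset (Fin p)) :
    node i S ≠ 0 := by
  intro h
  have h1 : node i S ⟨0, hn⟩ = 0 := by rw [h]; rfl
  have h2 : (0 : ℝ) ≤ ∑ s ∈ S, if (⟨0, hn⟩ : Fin n) = i s then (1 : ℝ) else 0 :=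
    Finset.sum_nonneg fun s _ => by split_ifs <;> norm_num
  simp only [node] at h1
  linarith

def polz {n p : ℕ} {A : Type*} [AddCommGroup A] [Module ℝ A] (G : En n → A) :
    (Fin p → Fin n) → A := fun i => (p.factorial : ℝ)⁻¹ •
      ∑ S ∈ (Finset.univ : Finset (Fin p)).powerset, (∏ _s ∈ Finset.univ \ S, (-1 : ℝ)) •
        G (node i S)

lemma polz_map {n p : ℕ} {A B : Type*} [AddCommGroup A] [Module ℝ A] [AddCommGroup B] [Module ℝ B]
    (L : A →ₗ[ℝ] B) (G : En n → A) (i : Fin p → Fin n) :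
    L (polz G i) = polz (fun ξ => L (G ξ)) i := by
  simp only [polz, map_smul, map_sum]

lemma polz_tev {n p : ℕ} {A : Type*} [AddCommGroup A] [Module ℝ A] (T : (Fin p → Fin n) → A) :
    polz (tev T) = symz T := by
  classical
  funext i
  unfold polz symz
  congr 1
  have h1 : ∀ S : Finset (Fin p), (∏ _s ∈ Finset.univ \ S, (-1 : ℝ)) • tev T (node i S)
      = ∑ j : Fin p → Fin n, ((∏ _s ∈ Finset.univ \ S, (-1 : ℝ)) *
        ∏ r, (1 + ∑ s ∈ S, if j r = i s then (1 : ℝ) else 0)) • T j := by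
    intro S
    rw [tev, Finset.smul_sum]
    refine Finset.sum_congr rfl fun j _ => ?_
    rw [smul_smul]; rfl
  simp_rw [h1]
  rw [Finset.sum_comm]
  simp_rw [← Finset.sum_smul]
  have h2 : ∀ j : Fin p → Fin n, ∑ S ∈ (Finset.univ : Finset (Fin p)).powerset,
      ((∏ _s ∈ Finset.univ \ S, (-1 : ℝ)) *
        ∏ r, (1 + ∑ s ∈ S, if j r = i s then (1 : ℝ) else 0)) =
      ∑ π : Equiv.Perm (Fin p), if j = i ∘ π then (1 : ℝ) else 0 := by
    intro j
    rw [polar_scalar p (fun _ => 1) (fun r s => if j r = i s then 1 else 0)]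
    refine Finset.sum_congr rfl fun π _ => ?_
    rw [Finset.prod_ite_zero, Finset.prod_const_one]
    congr 1
    simp [funext_iff]
  simp_rw [h2, Finset.sum_smul]
  rw [Finset.sum_comm]
  refine Finset.sum_congr rfl fun π _ => ?_
  simp [ite_smul]

lemma tev_inj {n p : ℕ} {A : Type*} [AddCommGroup A] [Module ℝ A] (T U : (Fin p → Fin n) → A)
    (hT : ∀ (π : Equiv.Perm (Fin p)) i, T (i ∘ π) = T i)
    (hU : ∀ (π : Equiv.Perm (Fin p)) i, U (i ∘ π) = U i)
    (h : ∀ ξ, tev T ξ = tev U ξ) : T = U := by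
  rw [← symz_of_symm T hT, ← symz_of_symm U hU, ← polz_tev, ← polz_tev, funext h]

end Polar

section FourierPart

/-- Fourier transform at `y` of the complexification of a real Schwartz function -/
def Lam {n : ℕ} (y : En n) : 𝓢(En n, ℝ) →ₗ[ℝ] ℂ where
  toFun S := 𝓕 (SchwartzMap.postcompCLM Complex.ofRealCLM S) y
  map_add' S T := by rw [map_add, FourierTransform.fourier_add]; rfl
  map_smul' c S := by
    rw [map_smul, FourierTransform.fourier_smul]; rfl

lemma Lam_def {n : ℕ} (y : En n) (S : 𝓢(En n, ℝ)) :
    Lam y S = 𝓕 (SchwartzMap.postcompCLM Complex.ofRealCLM S) y := rfl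

lemma Lam_deriv {n : ℕ} (y m : En n) (S : 𝓢(En n, ℝ)) :
    Lam y (∂_{m} S) = (2 * Real.pi * Complex.I * (⟪y, m⟫ : ℝ)) * Lam y S := by
  have h1 : SchwartzMap.postcompCLM Complex.ofRealCLM (∂_{m} S)
      = ∂_{m} (SchwartzMap.postcompCLM Complex.ofRealCLM S) := by
    ext x
    rw [SchwartzMap.postcompCLM_apply, SchwartzMap.lineDerivOp_apply_eq_fderiv,
      SchwartzMap.lineDerivOp_apply_eq_fderiv]
    have h2 : HasFDerivAt (fun x => Complex.ofRealCLM (S x))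
      (Complex.ofRealCLM.comp (fderiv ℝ S x)) x :=
      Complex.ofRealCLM.hasFDerivAt.comp x S.differentiableAt.hasFDerivAt
    have h3 : fderiv ℝ (SchwartzMap.postcompCLM Complex.ofRealCLM S) x
      = Complex.ofRealCLM.comp (fderiv ℝ S x) := h2.fderiv
    rw [h3]; rfl
  have ht : (fun x : En n => inner ℝ x m).HasTemperateGrowth := by fun_prop
  rw [Lam_def, Lam_def, h1, SchwartzMap.fourier_lineDerivOp_eq, smul_apply,
    SchwartzMap.smulLeftCLM_apply_apply ht]
  simp only [smul_eq_mul, Complex.real_smul]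
  ring

lemma Lam_iter {n : ℕ} (y m : En n) (c : ℕ) (S : 𝓢(En n, ℝ)) :
    Lam y ((fun S : 𝓢(En n, ℝ) => ∂_{m} S)^[c] S)
      = (2 * Real.pi * Complex.I * (⟪y, m⟫ : ℝ)) ^ c * Lam y S := by
  induction c with
  | zero => simp
  | succ c ih =>
    rw [Function.iterate_succ_apply', Lam_deriv, ih]; ring

lemma Lam_bound {n : ℕ} (y : En n) (S : 𝓢(En n, ℝ)) : ‖Lam y S‖ ≤ ∫ x, ‖S x‖ := by
  rw [Lam_def, SchwartzMap.fourier_coe]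
  rw [Real.fourier_eq]
  refine (norm_integral_le_integral_norm _).trans (le_of_eq ?_)
  simp

lemma Lam_cont {n : ℕ} (S : 𝓢(En n, ℝ)) : Continuous (fun y => Lam y S) :=
  (𝓕 (SchwartzMap.postcompCLM Complex.ofRealCLM S)).continuous

lemma Lam_inj {n : ℕ} (S T : 𝓢(En n, ℝ)) (h : ∀ y, Lam y S = Lam y T) : S = T := by
  have h1 : 𝓕 (SchwartzMap.postcompCLM Complex.ofRealCLM S)
      = 𝓕 (SchwartzMap.postcompCLM Complex.ofRealCLM T) := by
    ext y; exact h y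
  have h2 := congrArg (fun U : 𝓢(En n, ℂ) => (𝓕⁻ U : 𝓢(En n, ℂ))) h1
  simp only [FourierTransform.fourierInv_fourier_eq] at h2
  ext x
  have h3 : Complex.ofRealCLM (S x) = Complex.ofRealCLM (T x) :=
    congrArg (fun U : 𝓢(En n, ℂ) => U x) h2
  exact Complex.ofReal_injective h3

end FourierPart

section DsymPart

lemma tev_snoc {n m : ℕ} {A : Type*} [AddCommGroup A] [Module ℝ A]
    (F : (Fin (m + 1) → Fin n) → A) (ξ : En n) :
    tev F ξ = ∑ i : Fin m → Fin n, (∏ r, ξ (i r)) • ∑ j, ξ j • F (Fin.snoc i j) := by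
  unfold tev
  rw [← (Fin.snocEquiv (fun _ : Fin (m + 1) => Fin n)).sum_comp, Fintype.sum_prod_type,
    Finset.sum_comm]
  refine Finset.sum_congr rfl fun i _ => ?_
  rw [Finset.smul_sum]
  refine Finset.sum_congr rfl fun j _ => ?_
  have hc : (Fin.snocEquiv (fun _ : Fin (m + 1) => Fin n)) (j, i)
    = (Fin.snoc i j : Fin (m + 1) → Fin n) := rfl
  rw [hc, Fin.prod_univ_castSucc]
  simp only [Fin.snoc_castSucc, Fin.snoc_last, smul_smul]

lemma tev_dsym {n m : ℕ} (u : (Fin m → Fin n) → En n → ℝ) (x ξ : En n)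
    (hu : ∀ i, DifferentiableAt ℝ (u i) x) :
    tev (fun i => dsym u i x) ξ = fderiv ℝ (fun x => tev (fun i => u i x) ξ) x ξ := by
  have h1 : (fun i => dsym u i x) = symz (fun i : Fin (m + 1) → Fin n =>
      pd (i (Fin.last m)) (u (fun s => i s.castSucc)) x) := by
    funext i
    exact symz_map (LinearMap.proj x : (En n → ℝ) →ₗ[ℝ] ℝ) (fun i : Fin (m + 1) → Fin n =>
      pd (i (Fin.last m)) (u (fun s => i s.castSucc))) i
  rw [h1, tev_symz, tev_snoc]
  have h2 : HasFDerivAt (fun x => tev (fun i => u i x) ξ)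
      (∑ i : Fin m → Fin n, (∏ r, ξ (i r)) • fderiv ℝ (u i) x) x := by
    unfold tev
    exact HasFDerivAt.fun_sum fun i _ => (hu i).hasFDerivAt.fun_const_smul (∏ r, ξ (i r))
  rw [h2.fderiv, sum_apply]
  refine Finset.sum_congr rfl fun i _ => ?_
  rw [smul_apply]
  congr 1
  have h3 := lin_eq (fderiv ℝ (u i) x).toLinearMap ξ
  refine Eq.trans ?_ h3.symm
  refine Finset.sum_congr rfl fun j _ => ?_
  simp only [Fin.snoc_castSucc, Fin.snoc_last, smul_eq_mul]
  rfl

lemma contDiff_pd {n : ℕ} (j : Fin n) (u : En n → ℝ) (hu : ContDiff ℝ (⊤ : ℕ∞) u) :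
    ContDiff ℝ (⊤ : ℕ∞) (pd j u) := by
  unfold pd
  exact (hu.fderiv_right (m := (⊤ : ℕ∞)) (by simp)).clm_apply contDiff_const

lemma contDiff_dsym {n m : ℕ} (u : (Fin m → Fin n) → En n → ℝ)
    (hu : ∀ i, ContDiff ℝ (⊤ : ℕ∞) (u i)) (i) : ContDiff ℝ (⊤ : ℕ∞) (dsym u i) := by
  unfold dsym symz
  have h : ∀ s : Finset (Equiv.Perm (Fin (m + 1))), ContDiff ℝ (⊤ : ℕ∞) (∑ π ∈ s,
      pd ((i ∘ π) (Fin.last m)) (u (fun s => (i ∘ π) s.castSucc))) := by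
    intro s
    have : (∑ π ∈ s, pd ((i ∘ π) (Fin.last m)) (u (fun s => (i ∘ π) s.castSucc)))
      = fun x => ∑ π ∈ s, pd ((i ∘ π) (Fin.last m)) (u (fun s => (i ∘ π) s.castSucc)) x := by
      funext x; simp [Finset.sum_apply]
    rw [this]
    exact ContDiff.sum fun π _ => contDiff_pd _ _ (hu _)
  exact ContDiff.const_smul (((m + 1).factorial : ℝ)⁻¹) (h Finset.univ)

lemma contDiff_dpow {n m : ℕ} (u : (Fin m → Fin n) → En n → ℝ)
    (hu : ∀ i, ContDiff ℝ (⊤ : ℕ∞) (u i)) (c : ℕ) :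
    ∀ i, ContDiff ℝ (⊤ : ℕ∞) (dpow c u i) := by
  induction c with
  | zero => exact hu
  | succ c ih => exact contDiff_dsym _ ih

lemma sch_tev_apply {n m : ℕ} (W : (Fin m → Fin n) → 𝓢(En n, ℝ)) (ξ x : En n) :
    (tev W ξ) x = tev (fun i => W i x) ξ := by
  let L : 𝓢(En n, ℝ) →ₗ[ℝ] ℝ :=
    { toFun := fun S => S x, map_add' := fun _ _ => rfl, map_smul' := fun _ _ => rfl }
  exact tev_map L W ξ

lemma sch_dsym {n m : ℕ} (W : (Fin m → Fin n) → 𝓢(En n, ℝ)) :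
    ∃ W' : (Fin (m + 1) → Fin n) → 𝓢(En n, ℝ), (∀ i, ⇑(W' i) = dsym (fun j => ⇑(W j)) i) ∧
      ∀ ξ, tev W' ξ = ∂_{ξ} (tev W ξ) := by
  have h1 : ∀ i, ⇑(symz (fun i : Fin (m + 1) → Fin n =>
      (∂_{(EuclideanSpace.single (i (Fin.last m)) (1 : ℝ) : En n)} (W (fun s => i s.castSucc)) :
        𝓢(En n, ℝ))) i) = dsym (fun j => ⇑(W j)) i := by
    intro i
    let L : 𝓢(En n, ℝ) →ₗ[ℝ] (En n → ℝ) :=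
      { toFun := fun S => ⇑S, map_add' := fun _ _ => rfl, map_smul' := fun _ _ => rfl }
    exact symz_map L (fun i : Fin (m + 1) → Fin n =>
      (∂_{(EuclideanSpace.single (i (Fin.last m)) (1 : ℝ) : En n)} (W (fun s => i s.castSucc)) :
        𝓢(En n, ℝ))) i
  refine ⟨_, h1, fun ξ => ?_⟩
  ext x
  rw [sch_tev_apply, SchwartzMap.lineDerivOp_apply_eq_fderiv]
  simp_rw [h1]
  rw [tev_dsym _ _ _ fun i => (W i).differentiableAt]
  congr 2
  funext x
  rw [sch_tev_apply]

lemma sch_dpow {n m : ℕ} (W : (Fin m → Fin n) → 𝓢(En n, ℝ)) (c : ℕ) :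
    ∃ W' : (Fin (m + c) → Fin n) → 𝓢(En n, ℝ), (∀ i, ⇑(W' i) = dpow c (fun j => ⇑(W j)) i) ∧
      ∀ ξ, tev W' ξ = (fun S : 𝓢(En n, ℝ) => ∂_{ξ} S)^[c] (tev W ξ) := by
  induction c with
  | zero => exact ⟨W, fun _ => rfl, fun _ => rfl⟩
  | succ c ih =>
    obtain ⟨W1, h1, h2⟩ := ih
    obtain ⟨W2, h3, h4⟩ := sch_dsym W1
    refine ⟨W2, fun i => ?_, fun ξ => ?_⟩
    · rw [h3]
      have : (fun j => ⇑(W1 j)) = dpow c (fun j => ⇑(W j)) := funext h1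
      rw [this]; rfl
    · rw [h4, Function.iterate_succ_apply', h2]

lemma momRT_eq {n m : ℕ} (q : ℕ) (f : (Fin m → Fin n) → En n → ℝ) (x ξ : En n) :
    momRT q f x ξ = ∫ t : ℝ, t ^ q * tev (fun i => f i (x + t • ξ)) ξ := by
  unfold momRT tev
  simp only [smul_eq_mul, mul_comm]

end DsymPart

section Backward

lemma line_tendsto {n : ℕ} (ω : En n) (hω : ‖ω‖ = 1) (x : En n) :
    Tendsto (fun t : ℝ => x + t • ω) (cocompact ℝ) (cocompact (En n)) := by
  have h := (line_antilip ω hω x).tendsto_cobounded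
  rwa [Metric.cobounded_eq_cocompact, Metric.cobounded_eq_cocompact] at h

lemma kernel_backward {n p k : ℕ}
    (f : (Fin (p + (k + 1)) → Fin n) → En n → ℝ) (hf : IsSchwartzField f)
    (v : (Fin p → Fin n) → En n → ℝ) (hv : ∀ j, ContDiff ℝ (⊤ : ℕ∞) (v j))
    (hfv : ∀ i x, f i x = dpow (k + 1) v i x)
    (hdec : ∀ ℓ, ℓ ≤ k → ∀ i, Tendsto (dpow ℓ v i) (cocompact (En n)) (nhds 0))
    (ℓ : ℕ) (hℓ : ℓ ≤ k) (x ξ : En n) (hξ : ‖ξ‖ = 1) : momRT ℓ f x ξ = 0 := by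
  set φ : ℕ → ℝ → ℝ := fun l t => tev (fun i => dpow l v i (x + t • ξ)) ξ with hφ
  have hder : ∀ l t, HasDerivAt (φ l) (φ (l + 1) t) t := by
    intro l t
    have hd : ∀ i, Differentiable ℝ (dpow l v i) := fun i =>
      (contDiff_dpow v hv l i).differentiable (by simp)
    have h1 : φ (l + 1) t = fderiv ℝ (fun x => tev (fun i => dpow l v i x) ξ) (x + t • ξ) ξ :=
      tev_dsym (dpow l v) (x + t • ξ) ξ fun i => hd i _
    rw [h1]
    have h2 : Differentiable ℝ (fun x => tev (fun i => dpow l v i x) ξ) := by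
      unfold tev
      exact Differentiable.fun_sum fun i _ => (hd i).fun_const_smul (∏ r, ξ (i r))
    have h3 : HasDerivAt (fun s : ℝ => x + s • ξ) ξ t := by
      simpa using ((hasDerivAt_id t).smul_const ξ).const_add x
    exact (h2 (x + t • ξ)).hasFDerivAt.comp_hasDerivAt t h3
  have htend : ∀ l, l ≤ k → Tendsto (φ l) (cocompact ℝ) (nhds 0) := by
    intro l hl
    have : Tendsto (fun t => ∑ i : Fin (p + l) → Fin n,
        (∏ r, ξ (i r)) • dpow l v i (x + t • ξ)) (cocompact ℝ)
        (nhds (∑ i : Fin (p + l) → Fin n, (∏ r, ξ (i r)) • (0 : ℝ))) :=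
      tendsto_finsetSum _ fun i _ =>
        ((hdec l hl i).comp (line_tendsto ξ hξ x)).const_smul _
    simp only [smul_zero, Finset.sum_const_zero] at this
    exact this
  have hsch : ∀ j, j ≤ k + 1 → ∃ Ψ : 𝓢(ℝ, ℝ), ⇑Ψ = φ (k + 1 - j) := by
    intro j
    induction j with
    | zero =>
      intro _
      choose F hF using hf
      obtain ⟨ψ, hψ⟩ := exists_line (tev F ξ) ξ hξ x
      refine ⟨ψ, funext fun t => ?_⟩
      rw [hψ, sch_tev_apply]
      simp only [hF, hfv]
      rfl
    | succ j ih =>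
      intro hj
      obtain ⟨Ψ, hΨ⟩ := ih (by omega)
      have e : k + 1 - j = (k + 1 - (j + 1)) + 1 := by omega
      have ht := htend (k + 1 - (j + 1)) (by omega)
      refine schwartz_of_deriv Ψ (φ (k + 1 - (j + 1))) (fun t => ?_)
        (ht.mono_left atTop_le_cocompact) (ht.mono_left atBot_le_cocompact)
      rw [hΨ, e]
      exact hder _ t
  have hsch' : ∀ l, l ≤ k + 1 → ∃ Ψ : 𝓢(ℝ, ℝ), ⇑Ψ = φ l := by
    intro l hl
    obtain ⟨Ψ, h⟩ := hsch (k + 1 - l) (by omega)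
    rw [show k + 1 - (k + 1 - l) = l by omega] at h
    exact ⟨Ψ, h⟩
  have hmom : ∀ q l, q ≤ l → l + 1 ≤ k + 1 → ∫ t, t ^ q * φ (l + 1) t = 0 := by
    intro q
    induction q with
    | zero =>
      intro l _ hl
      obtain ⟨Ψ, h⟩ := hsch' l (by omega)
      obtain ⟨Ψ', h'⟩ := hsch' (l + 1) hl
      have := mom_parts0 Ψ Ψ' (fun t => by rw [h, h']; exact hder l t)
      rw [h'] at this
      simpa using this
    | succ q ih =>
      intro l hq hl
      obtain ⟨l, rfl⟩ : ∃ l', l = l' + 1 := ⟨l - 1, by omega⟩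
      obtain ⟨Ψ, h⟩ := hsch' (l + 1) (by omega)
      obtain ⟨Ψ', h'⟩ := hsch' (l + 1 + 1) hl
      have := mom_parts Ψ Ψ' (fun t => by rw [h, h']; exact hder (l + 1) t) q
      rw [h', h, ih l (by omega) (by omega)] at this
      simpa using this
  rw [momRT_eq]
  simp only [hfv]
  exact hmom ℓ k hℓ le_rfl

end Backward

section Forward

lemma mom_shift {n : ℕ} (g : 𝓢(En n, ℝ)) (ω : En n) (hω : ‖ω‖ = 1) (c : ℕ)
    (h : ∀ l, l < c → ∀ x, ⟪x, ω⟫ = 0 → ∫ t : ℝ, t ^ l * g (x + t • ω) = 0) :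
    ∀ l, l < c → ∀ x, ∫ t : ℝ, t ^ l * g (x + t • ω) = 0 := by
  intro l hl x
  set a := ⟪x, ω⟫ with ha
  set x0 := x - a • ω with hx0
  have hperp : ⟪x0, ω⟫ = 0 := by
    rw [hx0, inner_sub_left, inner_smul_left, real_inner_self_eq_norm_sq, hω]
    simp [ha]
  have h1 : ∀ t : ℝ, t ^ l * g (x + t • ω) =
      (fun s : ℝ => (s - a) ^ l * g (x0 + s • ω)) (t + a) := by
    intro t
    have : x0 + (t + a) • ω = x + t • ω := by rw [hx0, add_smul]; abel
    simp only [this, add_sub_cancel_right]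
  simp_rw [h1]
  rw [integral_add_right_eq_self (fun s : ℝ => (s - a) ^ l * g (x0 + s • ω)) a]
  obtain ⟨ψ, hψ⟩ := exists_line g ω hω x0
  have h2 : ∀ s : ℝ, (s - a) ^ l * g (x0 + s • ω) =
      ∑ m ∈ Finset.range (l + 1), ((-a) ^ (l - m) * (l.choose m)) * (s ^ m * ψ s) := by
    intro s
    rw [sub_eq_add_neg, add_pow, Finset.sum_mul, hψ]
    refine Finset.sum_congr rfl fun m _ => by ring
  simp_rw [h2]
  rw [integral_finsetSum _ fun m _ => (sch_mom_integrable ψ m).const_mul _]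
  refine Finset.sum_eq_zero fun m hm => ?_
  rw [integral_const_mul]
  simp_rw [hψ]
  rw [h m (by have := Finset.mem_range.1 hm; omega) x0 hperp, mul_zero]

lemma tev_homog {n m : ℕ} {A : Type*} [AddCommGroup A] [Module ℝ A] (T : (Fin m → Fin n) → A)
    (r : ℝ) (ξ : En n) : tev T (r • ξ) = r ^ m • tev T ξ := by
  unfold tev
  rw [Finset.smul_sum]
  refine Finset.sum_congr rfl fun i _ => ?_
  rw [smul_smul]
  congr 1
  simp [Finset.prod_mul_distrib]

lemma unit_potential {n m : ℕ} (φ : (Fin m → Fin n) → 𝓢(En n, ℝ)) (c : ℕ)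
    (h : ∀ ω : En n, ‖ω‖ = 1 → ∀ l, l < c → ∀ x, ⟪x, ω⟫ = 0 →
      ∫ t : ℝ, t ^ l * (tev φ ω) (x + t • ω) = 0) :
    ∃ C : ℝ, 0 ≤ C ∧ ∀ ω : En n, ‖ω‖ = 1 → ∃ V : 𝓢(En n, ℝ),
      (fun S : 𝓢(En n, ℝ) => ∂_{ω} S)^[c] V = tev φ ω ∧ ∫ x, ‖V x‖ ≤ C := by
  set N := n + 1 with hN
  choose B hB0 hB using fun i => sch_decay (φ i) (N + 2 * c)
  have hint : Integrable (fun x : En n => (1 + ‖x‖) ^ (-(N : ℝ))) :=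
    integrable_one_add_norm (by simp [hN])
  refine ⟨Real.pi ^ c * (∑ i, B i) * ∫ x : En n, (1 + ‖x‖) ^ (-(N : ℝ)), ?_, fun ω hω => ?_⟩
  · have h1 : 0 ≤ ∑ i, B i := Finset.sum_nonneg fun i _ => hB0 i
    have h2 : 0 ≤ ∫ x : En n, (1 + ‖x‖) ^ (-(N : ℝ)) :=
      integral_nonneg fun x => by positivity
    have := Real.pi_pos
    positivity
  · obtain ⟨V, hV, hVb⟩ := iter_antid ω hω N c (tev φ ω)
      (mom_shift (tev φ ω) ω hω c (h ω hω)) (∑ i, B i) (by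
        intro x
        rw [sch_tev_apply]
        unfold tev
        calc (1 + ‖x‖) ^ (N + 2 * c) * ‖∑ i, (∏ r, ω (i r)) • φ i x‖
            ≤ (1 + ‖x‖) ^ (N + 2 * c) * ∑ i, ‖φ i x‖ := by
              gcongr
              refine (norm_sum_le _ _).trans (Finset.sum_le_sum fun i _ => ?_)
              rw [norm_smul]
              refine mul_le_of_le_one_left (norm_nonneg _) ?_
              rw [norm_prod]
              refine Finset.prod_le_one (fun _ _ => norm_nonneg _) fun r _ => ?_
              exact (PiLp.norm_apply_le ω (i r)).trans hω.le
          _ ≤ ∑ i, B i := by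
              rw [Finset.mul_sum]
              exact Finset.sum_le_sum fun i _ => hB i x)
    refine ⟨V, hV, ?_⟩
    rw [← integral_const_mul]
    refine integral_mono V.integrable.norm (hint.const_mul _) fun x => ?_
    have h1 : 0 < 1 + ‖x‖ := by positivity
    simp only [Real.rpow_neg h1.le, Real.rpow_natCast]
    rw [← div_eq_mul_inv, le_div_iff₀ (by positivity), mul_comm]
    exact hVb x

lemma lam_potential {n p c : ℕ} (φ : (Fin (p + c) → Fin n) → 𝓢(En n, ℝ))
    (h : ∀ ω : En n, ‖ω‖ = 1 → ∀ l, l < c → ∀ x, ⟪x, ω⟫ = 0 →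
      ∫ t : ℝ, t ^ l * (tev φ ω) (x + t • ω) = 0) :
    ∃ C : ℝ, 0 ≤ C ∧ ∃ V : En n → 𝓢(En n, ℝ), ∀ ξ : En n, ξ ≠ 0 → ∀ y : En n,
      Lam y (tev φ ξ) = (2 * Real.pi * Complex.I * (⟪y, ξ⟫ : ℝ)) ^ c * Lam y (V ξ) ∧
      ‖Lam y (V ξ)‖ ≤ C * ‖ξ‖ ^ p := by
  classical
  obtain ⟨C, hC, H⟩ := unit_potential φ c h
  choose! W hW hWb using H
  refine ⟨C, hC, fun ξ => ‖ξ‖ ^ p • W (‖ξ‖⁻¹ • ξ), fun ξ hξ y => ?_⟩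
  have hr : ‖ξ‖ ≠ 0 := norm_ne_zero_iff.2 hξ
  have hu : ‖‖ξ‖⁻¹ • ξ‖ = 1 := by rw [norm_smul, norm_inv, norm_norm, inv_mul_cancel₀ hr]
  have hx : ξ = ‖ξ‖ • (‖ξ‖⁻¹ • ξ) := by rw [smul_smul, mul_inv_cancel₀ hr, one_smul]
  set ω := ‖ξ‖⁻¹ • ξ with hω
  constructor
  · have h1 : tev φ ξ = ‖ξ‖ ^ (p + c) • tev φ ω := by
      conv_lhs => rw [hx]
      rw [tev_homog]
    have h2 : ⟪y, ξ⟫ = ‖ξ‖ * ⟪y, ω⟫ := by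
      conv_lhs => rw [hx]
      rw [inner_smul_right]
    rw [h1, map_smul, map_smul, ← hW ω hu, Lam_iter, h2]
    simp only [Complex.real_smul]
    push_cast
    ring
  · rw [map_smul, norm_smul, mul_comm, norm_pow, norm_norm]
    gcongr
    exact (Lam_bound y _).trans (hWb ω hu)

lemma exists_schwartz_potential {n p c : ℕ} (hn : 0 < n) (hc : 0 < c)
    (φ : (Fin (p + c) → Fin n) → 𝓢(En n, ℝ))
    (h : ∀ ω : En n, ‖ω‖ = 1 → ∀ l, l < c → ∀ x, ⟪x, ω⟫ = 0 →
      ∫ t : ℝ, t ^ l * (tev φ ω) (x + t • ω) = 0) :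
    ∃ w : (Fin p → Fin n) → 𝓢(En n, ℝ), (∀ (π : Equiv.Perm (Fin p)) i, w (i ∘ π) = w i) ∧
      ∀ ξ, (fun S : 𝓢(En n, ℝ) => ∂_{ξ} S)^[c] (tev w ξ) = tev φ ξ := by
  obtain ⟨C, hC, V, hV⟩ := lam_potential φ h
  refine ⟨symz (polz V), symz_symm _, fun ξ => ?_⟩
  refine Lam_inj _ _ fun y => ?_
  revert y
  rw [← funext_iff]
  have hopen : ∀ q : (Fin p → Fin n) × Finset (Fin p),
      IsOpen {y : En n | ⟪node q.1 q.2, y⟫ ≠ 0} := fun q =>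
    isOpen_ne_fun (by fun_prop) continuous_const
  have hdense := dense_iInter_of_isOpen hopen fun q => dense_inner _ (node_ne hn q.1 q.2)
  refine Continuous.ext_on hdense (Lam_cont _) (Lam_cont _) fun y hy => ?_
  have hy1 : ∀ i S, ⟪y, node (p := p) i S⟫ ≠ 0 := by
    intro i S
    rw [real_inner_comm]
    exact Set.mem_iInter.1 hy (i, S)
  have hy0 : y ≠ 0 := by
    rintro rfl
    exact hy1 (fun _ => ⟨0, hn⟩) ∅ (inner_zero_left _)
  obtain ⟨G, hG⟩ := tev_div_pow y hy0 (C * (2 * Real.pi) ^ c) c (fun i => Lam y (φ i)) (by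
    intro η
    rw [← tev_map]
    by_cases hη : η = 0
    · subst hη
      have : tev φ (0 : En n) = 0 := by
        have h0 := tev_homog φ 0 (0 : En n)
        rw [zero_smul, zero_pow (by omega), zero_smul] at h0
        exact h0
      rw [this, map_zero, norm_zero]
      have := Real.pi_pos
      positivity
    · obtain ⟨e, b⟩ := hV η hη y
      rw [e, norm_mul, norm_pow]
      have : ‖(2 * Real.pi * Complex.I * (⟪y, η⟫ : ℝ) : ℂ)‖ = 2 * Real.pi * |⟪y, η⟫| := by
        simp [abs_of_pos Real.pi_pos]
      rw [this, mul_pow]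
      calc _ ≤ (2 * Real.pi) ^ c * |⟪y, η⟫| ^ c * (C * ‖η‖ ^ p) := by
            have := Real.pi_pos
            gcongr
        _ = _ := by ring)
  set z : ℂ := 2 * Real.pi * Complex.I with hz
  have hz0 : z ≠ 0 := by
    simp [hz, Real.pi_ne_zero]
  set M : ℂ →ₗ[ℝ] ℂ := LinearMap.mulLeft ℝ (z ^ c)⁻¹ with hM
  have hnode : ∀ i S, Lam y (V (node (p := p) i S)) = tev (fun j => M (G j)) (node i S) := by
    intro i S
    have e := (hV _ (node_ne hn i S) y).1
    have e2 := hG (node i S)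
    rw [← tev_map, e, mul_pow, Complex.real_smul] at e2
    rw [← tev_map, hM, LinearMap.mulLeft_apply]
    have h3 : ((⟪y, node i S⟫ : ℝ) : ℂ) ≠ 0 := by exact_mod_cast hy1 i S
    have h4 : ((⟪y, node i S⟫ : ℝ) : ℂ) ^ c ≠ 0 := pow_ne_zero _ h3
    have h5 : z ^ c ≠ 0 := pow_ne_zero _ hz0
    rw [eq_inv_mul_iff_mul_eq₀ h5]
    apply mul_left_cancel₀ h4
    push_cast at e2 ⊢
    rw [← e2]; ring
  have hw : (fun i => Lam y (symz (polz V) i)) = symz (symz (fun j => M (G j))) := by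
    funext i
    have h6 : (fun i => Lam y (polz V i)) = symz (fun j => M (G j)) := by
      rw [← polz_tev]
      funext i
      rw [polz_map]
      unfold polz
      simp_rw [hnode]
    rw [symz_map, h6]
  rw [Lam_iter, tev_map, tev_map, hw, tev_symz, tev_symz, hG, ← tev_map, hM,
    LinearMap.mulLeft_apply, mul_pow, Complex.real_smul]
  have h5 : z ^ c ≠ 0 := pow_ne_zero _ hz0
  push_cast
  field_simp
  rw [← hz]
  ring

end Forward

section Assembly

lemma kernel_forward {n p k : ℕ}
    (f : (Fin (p + (k + 1)) → Fin n) → En n → ℝ) (hf : IsSchwartzField f) (hfsym : IsSymField f)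
    (hn : 0 < n)
    (h : ∀ ℓ, ℓ ≤ k → ∀ x ξ : En n, ‖ξ‖ = 1 → ⟪x, ξ⟫ = 0 → momRT ℓ f x ξ = 0) :
    ∃ v : (Fin p → Fin n) → En n → ℝ,
      (∀ j, ContDiff ℝ (⊤ : ℕ∞) (v j)) ∧ IsSymField v ∧
      (∀ i x, f i x = dpow (k + 1) v i x) ∧
      (∀ ℓ, ℓ ≤ k → ∀ i, Tendsto (dpow ℓ v i) (cocompact (En n)) (nhds 0)) := by
  choose φ hφ using hf
  obtain ⟨w, hws, hw⟩ := exists_schwartz_potential (p := p) (c := k + 1) hn (by omega) φ (by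
    intro ω hω l hl x hx
    have := h l (by omega) x ω hω hx
    rw [momRT_eq] at this
    simp_rw [sch_tev_apply, hφ]
    exact this)
  refine ⟨fun j => ⇑(w j), fun j => (w j).smooth _, fun π i => ?_, ?_, fun l _ i => ?_⟩
  · show ⇑(w (i ∘ π)) = ⇑(w i)
    rw [hws]
  · obtain ⟨W, hW, hWt⟩ := sch_dpow w (k + 1)
    have key : ∀ x, (fun i => f i x) = fun i => dpow (k + 1) (fun j => ⇑(w j)) i x := by
      intro x
      refine tev_inj _ _ (fun π i => congrFun (hfsym π i) x) (fun π i => ?_) fun ξ => ?_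
      · have h2 : dpow (k + 1) (fun j => ⇑(w j)) (i ∘ π) = dpow (k + 1) (fun j => ⇑(w j)) i :=
          symz_symm (n := n) (A := En n → ℝ) (fun i : Fin (p + k + 1) → Fin n =>
            pd (i (Fin.last (p + k))) (dpow k (fun j => ⇑(w j)) (fun s => i s.castSucc))) π i
        exact congrFun h2 x
      · have h1 := congrArg (fun S : 𝓢(En n, ℝ) => S x) ((hWt ξ).trans (hw ξ))
        simp only [sch_tev_apply, hW, hφ] at h1
        exact h1.symm
    intro i x
    exact congrFun (key x) i
  · obtain ⟨W, hW, _⟩ := sch_dpow w l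
    rw [← hW]
    exact (W i).tendsto_cocompact

end Assembly

end Helpers

/-- kernel description of `𝓘^k = (I^0,…,I^k)`: a Schwartz symmetric
`m`-tensor field is in the kernel iff it is of the form `d^{k+1} v` with `v`
smooth symmetric of rank `m − k − 1` and `d^ℓ v → 0` at infinity for `0 ≤ ℓ ≤ k`.
The rank is `m = p + (k+1)` (so `k ≤ m − 1`), and `k ≤ n − 1` is expressed as
`k + 1 ≤ n`. -/
theorem momRT_kernel_description
    (n p k : ℕ) (hn : 2 ≤ n) (hk1 : 1 ≤ k) (hkn : k + 1 ≤ n)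
    (f : (Fin (p + (k + 1)) → Fin n) → En n → ℝ)
    (hf : IsSchwartzField f) (hfsym : IsSymField f) :
    (∀ ℓ, ℓ ≤ k → ∀ x ξ : En n, ‖ξ‖ = 1 → ⟪x, ξ⟫ = 0 → momRT ℓ f x ξ = 0) ↔
    (∃ v : (Fin p → Fin n) → En n → ℝ,
      (∀ j, ContDiff ℝ (⊤ : ℕ∞) (v j)) ∧ IsSymField v ∧
      (∀ i x, f i x = dpow (k + 1) v i x) ∧
      (∀ ℓ, ℓ ≤ k → ∀ i, Tendsto (dpow ℓ v i) (cocompact (En n)) (nhds 0))) := by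
  constructor
  · intro h
    exact kernel_forward f hf hfsym (by omega) h
  · rintro ⟨v, hv, _, hfv, hdec⟩ ℓ hℓ x ξ hξ _
    exact kernel_backward f hf v hv hfv hdec ℓ hℓ x ξ hξ
end
end
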